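/- Let p > 1 and −1 < α < p−2, and let μ be a finite positive Borel measure on [0,1). Then the following are equivalent: (a) μ is a Carleson measure; (b) there exists a constant C > 0 such that for every f in the weighted Bergman space A^p_α, the integral I_μ f(z) = ∫_{[0,1)} f(t)/(1 − t z) dμ(t) converges absolutely for every z in the unit disc 𝔻, the resulting function I_μ f is analytic in 𝔻, belongs to A^p_α, and ‖I_μ f‖_{A^p_α} ≤ C ‖f‖_{A^p_α}. -/

import Mathlib

open MeasureTheory Set Metric Filter Asymptotics
open scoped ENNReal

/-- Normalized area measure on `ℂ`: Lebesgue area divided by `π`,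
so that the unit disc has total mass `1`. -/
noncomputable def dA : Measure ℂ := (ENNReal.ofReal Real.pi)⁻¹ • volume

/-- The (weighted) Bergman norm `‖f‖_{A^p_α} = ((α+1) ∫_𝔻 (1-|z|²)^α |f(z)|^p dA)^{1/p}`,
as an extended real number. -/
noncomputable def bergmanNorm (p α : ℝ) (f : ℂ → ℂ) : ℝ≥0∞ :=
  (ENNReal.ofReal (α + 1) *
    ∫⁻ z in ball (0 : ℂ) 1, ENNReal.ofReal ((1 - ‖z‖ ^ 2) ^ α * ‖f z‖ ^ p) ∂dA) ^ (1 / p)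

/-- The Dirichlet-type norm `‖f‖_{𝒟^p_α} = |f(0)| + ‖f′‖_{A^p_α}`. -/
noncomputable def dirichletNorm (p α : ℝ) (f : ℂ → ℂ) : ℝ≥0∞ :=
  ENNReal.ofReal ‖f 0‖ + bergmanNorm p α (deriv f)

/-- The Hardy `H^1` norm `sup_{0 ≤ r < 1} (2π)⁻¹ ∫_0^{2π} |f(re^{iθ})| dθ`. -/
noncomputable def hardyNorm (f : ℂ → ℂ) : ℝ≥0∞ :=
  ⨆ r ∈ Ico (0 : ℝ) 1,
    (ENNReal.ofReal (2 * Real.pi))⁻¹ *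
      ∫⁻ θ in Ioc (0 : ℝ) (2 * Real.pi),
        ENNReal.ofReal ‖f ((r : ℂ) * Complex.exp ((θ : ℂ) * Complex.I))‖

/-- The operator `I_μ f(z) = ∫_{[0,1)} f(t)/(1-tz) dμ(t)`. -/
noncomputable def Imu (μ : Measure ℝ) (f : ℂ → ℂ) (z : ℂ) : ℂ :=
  ∫ t : ℝ, f (t : ℂ) / (1 - (t : ℂ) * z) ∂μ

/-- The moment of order `n` of `μ`. -/
noncomputable def moment (μ : Measure ℝ) (n : ℕ) : ℝ := ∫ t : ℝ, t ^ n ∂μ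

/-- `M_∞(r, f) = sup_{|z| = r} |f(z)|`. -/
noncomputable def Minf (f : ℂ → ℂ) (r : ℝ) : ℝ := ⨆ z ∈ sphere (0 : ℂ) r, ‖f z‖

/-!
Both `dA_α` and a Carleson measure `μ` are controlled near the boundary point `1` by the growth of
their sublevel sets `{z | |1 - z| ≤ s}`, of orders `s ^ (α + 2)` and `s`. Since `|1 - t z|` is
comparable to `max |1 - z| (1 - t)`, the function `|I_μ f|` is dominated by a Hilbert-type operator,
and Schur's test with power weights bounds its `L^p(dA_α)` norm by the norm of `|f|` in
`L^p((1 - t)^(α + 1) dμ(t))`; power weights are admissible because `0 < α + 2 < p`. The mean value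
property over the disc of radius `(1 - t) / 2` about `t`, followed by Tonelli's theorem, bounds that
norm by `‖f‖_{A^p_α}`.

Conversely, the test functions `1 / (1 - a z)` have norm `O((1 - a)^((α + 2) / p - 1))`, while
`I_μ` sends them to functions of size at least `μ [a, 1) / (4 (1 - a) ^ 2)` at the point `a`; the
growth estimate for functions in `A^p_α` then gives `μ [a, 1) = O(1 - a)`.
-/

open scoped NNReal

/-- The sublevel sets of `u` have `ν`-measure `ν {u ≤ s} = O(s ^ κ)`. With `u` the distance to the
boundary point `1`, this is the Carleson condition for `κ = 1`, and the weighted area of the disc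
satisfies it with `κ = α + 2`. -/
def HasSublevelGrowth {X : Type*} [MeasurableSpace X] (ν : Measure X) (u : X → ℝ≥0) (κ : ℝ) :
    Prop :=
  ∃ C : ℝ≥0, ∀ s : ℝ≥0, ν {x | u x ≤ s} ≤ C * (s : ℝ≥0∞) ^ κ

theorem setLIntegral_Ioc_rpow {b δ : ℝ} (hb : -1 < b) (hδ : 0 ≤ δ) :
    ∫⁻ x in Ioc 0 δ, ENNReal.ofReal x ^ b = ENNReal.ofReal (δ ^ (b + 1) / (b + 1)) := by
  have hint : IntegrableOn (fun x : ℝ => x ^ b) (Ioc 0 δ) :=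
    (intervalIntegrable_iff_integrableOn_Ioc_of_le hδ).1
      (intervalIntegral.intervalIntegrable_rpow' hb)
  have hnonneg : 0 ≤ᵐ[volume.restrict (Ioc 0 δ)] fun x : ℝ => x ^ b :=
    ae_restrict_of_forall_mem measurableSet_Ioc fun x hx => Real.rpow_nonneg hx.1.le b
  calc ∫⁻ x in Ioc 0 δ, ENNReal.ofReal x ^ b = ∫⁻ x in Ioc 0 δ, ENNReal.ofReal (x ^ b) :=
        setLIntegral_congr_fun measurableSet_Ioc fun x hx => ENNReal.ofReal_rpow_of_pos hx.1
    _ = ENNReal.ofReal (δ ^ (b + 1) / (b + 1)) := by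
        rw [← ofReal_integral_eq_lintegral_ofReal hint hnonneg,
          ← intervalIntegral.integral_of_le hδ, integral_rpow (Or.inl hb),
          Real.zero_rpow (by linarith), sub_zero]

theorem setLIntegral_Ioi_rpow {b δ : ℝ} (hb : b < -1) (hδ : 0 < δ) :
    ∫⁻ x in Ioi δ, ENNReal.ofReal x ^ b = ENNReal.ofReal (-δ ^ (b + 1) / (b + 1)) := by
  have hnonneg : 0 ≤ᵐ[volume.restrict (Ioi δ)] fun x : ℝ => x ^ b :=
    ae_restrict_of_forall_mem measurableSet_Ioi fun x hx => Real.rpow_nonneg (hδ.trans hx).le b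
  calc ∫⁻ x in Ioi δ, ENNReal.ofReal x ^ b = ∫⁻ x in Ioi δ, ENNReal.ofReal (x ^ b) :=
        setLIntegral_congr_fun measurableSet_Ioi fun x hx =>
          ENNReal.ofReal_rpow_of_pos (hδ.trans hx)
    _ = ENNReal.ofReal (-δ ^ (b + 1) / (b + 1)) := by
        rw [← ofReal_integral_eq_lintegral_ofReal (integrableOn_Ioi_rpow_of_lt hb hδ) hnonneg,
          integral_Ioi_rpow_of_lt hb hδ]

theorem ennreal_rpow_le_rpow_of_nonpos {x y : ℝ≥0∞} {r : ℝ} (hr : r ≤ 0) (hxy : x ≤ y) :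
    y ^ r ≤ x ^ r := by
  rw [← neg_neg r, ENNReal.rpow_neg y, ENNReal.rpow_neg x, ENNReal.inv_le_inv]
  exact ENNReal.rpow_le_rpow hxy (neg_nonneg.2 hr)

theorem two_rpow_mul_two_mul_rpow_neg (z : ℝ≥0) (x : ℝ) :
    (2 : ℝ≥0∞) ^ x * (2 * z) ^ (-x) = z ^ (-x) := by
  rw [ENNReal.mul_rpow_of_ne_top ENNReal.ofNat_ne_top ENNReal.coe_ne_top, ← mul_assoc,
    ← ENNReal.rpow_add _ _ two_ne_zero ENNReal.ofNat_ne_top, add_neg_cancel, ENNReal.rpow_zero,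
    one_mul]

section SublevelGrowth

variable {a b c κ : ℝ}

theorem exists_setLIntegral_Ioi_rpow_mul_max_rpow_le (hc : -1 < c) (hcb : c + 1 < b) :
    ∃ C : ℝ≥0, ∀ δ : ℝ≥0, δ ≠ 0 →
      ∫⁻ x in Ioi (0 : ℝ), ENNReal.ofReal x ^ c * max (ENNReal.ofReal x) δ ^ (-b) ≤
        C * (δ : ℝ≥0∞) ^ (c + 1 - b) := by
  have hb : 0 ≤ b := by linarith
  refine ⟨(1 / (c + 1) + 1 / (b - c - 1)).toNNReal, fun δ hδ => ?_⟩
  have hδ_pos : (0 : ℝ) < δ := by positivity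
  have hδ_rpow (x : ℝ) : (δ : ℝ≥0∞) ^ x = ENNReal.ofReal ((δ : ℝ) ^ x) := by
    rw [← ENNReal.ofReal_rpow_of_pos hδ_pos, ENNReal.ofReal_coe_nnreal]
  have h_left : ∫⁻ x in Ioc (0 : ℝ) δ, ENNReal.ofReal x ^ c * max (ENNReal.ofReal x) δ ^ (-b) ≤
      ENNReal.ofReal ((δ : ℝ) ^ (c + 1 - b) * (1 / (c + 1))) := by
    calc _ ≤ ∫⁻ x in Ioc (0 : ℝ) δ, ENNReal.ofReal x ^ c * (δ : ℝ≥0∞) ^ (-b) :=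
          lintegral_mono fun x => mul_le_mul_right
            (ennreal_rpow_le_rpow_of_nonpos (neg_nonpos.2 hb) (le_max_right _ _)) _
      _ = ENNReal.ofReal ((δ : ℝ) ^ (c + 1) / (c + 1)) * ENNReal.ofReal ((δ : ℝ) ^ (-b)) := by
          rw [lintegral_mul_const' _ _ (by rw [hδ_rpow]; exact ENNReal.ofReal_ne_top),
            setLIntegral_Ioc_rpow hc δ.coe_nonneg, hδ_rpow]
      _ = _ := by
          rw [← ENNReal.ofReal_mul' (by positivity), sub_eq_add_neg (c + 1) b,
            Real.rpow_add hδ_pos (c + 1) (-b)]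
          ring_nf
  have h_right : ∫⁻ x in Ioi (δ : ℝ), ENNReal.ofReal x ^ c * max (ENNReal.ofReal x) δ ^ (-b) ≤
      ENNReal.ofReal ((δ : ℝ) ^ (c + 1 - b) * (1 / (b - c - 1))) := by
    calc _ ≤ ∫⁻ x in Ioi (δ : ℝ), ENNReal.ofReal x ^ (c - b) := by
          refine setLIntegral_mono' measurableSet_Ioi fun x hx => ?_
          have hx_pos : 0 < ENNReal.ofReal x := ENNReal.ofReal_pos.2 (hδ_pos.trans hx)
          rw [sub_eq_add_neg, ENNReal.rpow_add _ _ hx_pos.ne' ENNReal.ofReal_ne_top]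
          exact mul_le_mul_right
            (ennreal_rpow_le_rpow_of_nonpos (neg_nonpos.2 hb) (le_max_left _ _)) _
      _ = _ := by
          rw [setLIntegral_Ioi_rpow (by linarith) hδ_pos, sub_add_eq_add_sub, neg_div,
            ← div_neg, div_eq_mul_one_div]
          ring_nf
  have h_pos_left : 0 ≤ 1 / (c + 1) := one_div_nonneg.2 (by linarith)
  have h_pos_right : 0 ≤ 1 / (b - c - 1) := one_div_nonneg.2 (by linarith)
  rw [← Ioc_union_Ioi_eq_Ioi δ.coe_nonneg]
  refine (lintegral_union_le _ _ _).trans ((add_le_add h_left h_right).trans_eq ?_)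
  rw [hδ_rpow, ← ENNReal.ofReal_add (by positivity) (by positivity), ← mul_add,
    ENNReal.ofReal_mul (by positivity), mul_comm]
  rfl

theorem rpow_mul_max_rpow_le_setLIntegral (ha : -1 ≤ a) (hb : 0 ≤ b) {y : ℝ≥0} (hy : y ≠ 0)
    (δ : ℝ≥0) :
    (y : ℝ≥0∞) ^ (-a) * max (y : ℝ≥0∞) δ ^ (-b) ≤
      2 ^ (a + 1 + b) * ∫⁻ x in Ici (y : ℝ),
        ENNReal.ofReal x ^ (-a - 1) * max (ENNReal.ofReal x) δ ^ (-b) ∂volume.restrict (Ioi 0) := by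
  have hy0 : (y : ℝ≥0∞) ≠ 0 := ENNReal.coe_ne_zero.2 hy
  have h_volume : volume (Icc (y : ℝ) (2 * y)) = y := by
    rw [Real.volume_Icc, two_mul, add_sub_cancel_right, ENNReal.ofReal_coe_nnreal]
  have h_rpow : (y : ℝ≥0∞) ^ (-a) = y ^ (-(a + 1)) * y := by
    nth_rw 3 [← ENNReal.rpow_one y]
    rw [← ENNReal.rpow_add _ _ hy0 ENNReal.coe_ne_top, neg_add_rev, neg_add_cancel_comm]
  rw [← ENNReal.coe_max]
  calc (y : ℝ≥0∞) ^ (-a) * (max y δ : ℝ≥0) ^ (-b)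
      = 2 ^ (a + 1 + b) * ((2 * y) ^ (-(a + 1)) * (2 * (max y δ : ℝ≥0)) ^ (-b) *
          volume (Icc (y : ℝ) (2 * y))) := by
        rw [h_volume, h_rpow, ENNReal.rpow_add _ _ two_ne_zero ENNReal.ofNat_ne_top,
          ← two_rpow_mul_two_mul_rpow_neg _ b, ← two_rpow_mul_two_mul_rpow_neg]
        ring
    _ = 2 ^ (a + 1 + b) * ∫⁻ x in Icc (y : ℝ) (2 * y),
          (2 * y) ^ (-(a + 1)) * (2 * (max y δ : ℝ≥0)) ^ (-b) := by rw [setLIntegral_const]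
    _ ≤ 2 ^ (a + 1 + b) * ∫⁻ x in Icc (y : ℝ) (2 * y),
          ENNReal.ofReal x ^ (-(a + 1)) * max (ENNReal.ofReal x) δ ^ (-b) := by
        refine mul_le_mul_right (setLIntegral_mono' measurableSet_Icc fun x hx => ?_) _
        have hx_le : ENNReal.ofReal x ≤ 2 * y := by
          rw [← ENNReal.ofReal_coe_nnreal, ← ENNReal.ofReal_ofNat, ← ENNReal.ofReal_mul zero_le_two]
          exact ENNReal.ofReal_le_ofReal hx.2
        refine mul_le_mul' (ennreal_rpow_le_rpow_of_nonpos (by linarith) hx_le)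
          (ennreal_rpow_le_rpow_of_nonpos (by linarith) (max_le ?_ ?_))
        · exact hx_le.trans (mul_le_mul_right (ENNReal.coe_le_coe.2 (le_max_left _ _)) _)
        · exact (ENNReal.coe_le_coe.2 (le_max_right _ _)).trans
            (le_mul_of_one_le_left' one_le_two)
    _ ≤ _ := by
        rw [neg_add', Measure.restrict_restrict_of_subset (Ici_subset_Ioi.2 (by positivity))]
        exact mul_le_mul_right (lintegral_mono_set Icc_subset_Ici_self) _

variable {X : Type*} [MeasurableSpace X] {ν : Measure X} {u : X → ℝ≥0}

theorem HasSublevelGrowth.ae_ne_zero (hν : HasSublevelGrowth ν u κ) (hκ : 0 < κ) :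
    ∀ᵐ x ∂ν, u x ≠ 0 := by
  obtain ⟨C, hC⟩ := hν
  rw [ae_iff]
  simpa [ENNReal.zero_rpow_of_pos hκ] using hC 0

theorem lintegral_setLIntegral_Ici_eq [SFinite ν] {u : X → ℝ} (hu : Measurable u)
    (ρ : Measure ℝ) [SFinite ρ] {F : ℝ → ℝ≥0∞} (hF : Measurable F) :
    ∫⁻ x, ∫⁻ s in Ici (u x), F s ∂ρ ∂ν = ∫⁻ s, F s * ν {x | u x ≤ s} ∂ρ := by
  have h_meas : MeasurableSet {z : X × ℝ | u z.1 ≤ z.2} :=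
    measurableSet_le (hu.comp measurable_fst) measurable_snd
  calc ∫⁻ x, ∫⁻ s in Ici (u x), F s ∂ρ ∂ν
      = ∫⁻ x, ∫⁻ s, {z : X × ℝ | u z.1 ≤ z.2}.indicator (fun z => F z.2) (x, s) ∂ρ ∂ν :=
        lintegral_congr fun x => (lintegral_indicator measurableSet_Ici F).symm
    _ = ∫⁻ s, ∫⁻ x, {x | u x ≤ s}.indicator (fun _ => F s) x ∂ν ∂ρ :=
        lintegral_lintegral_swap ((hF.comp measurable_snd).indicator h_meas).aemeasurable
    _ = ∫⁻ s, F s * ν {x | u x ≤ s} ∂ρ :=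
        lintegral_congr fun s => lintegral_indicator_const (hu measurableSet_Iic) _

theorem HasSublevelGrowth.exists_lintegral_rpow_mul_max_rpow_le [SFinite ν]
    (hν : HasSublevelGrowth ν u κ) (hu : Measurable u) (ha : 0 ≤ a) (haκ : a < κ) (hb : κ < a + b) :
    ∃ C : ℝ≥0, ∀ δ : ℝ≥0, δ ≠ 0 →
      ∫⁻ x, (u x : ℝ≥0∞) ^ (-a) * max (u x : ℝ≥0∞) δ ^ (-b) ∂ν ≤
        C * (δ : ℝ≥0∞) ^ (κ - a - b) := by
  have ⟨D, hD⟩ := hν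
  obtain ⟨E, hE⟩ := exists_setLIntegral_Ioi_rpow_mul_max_rpow_le (b := b) (c := κ - a - 1)
    (by linarith) (by linarith)
  refine ⟨2 ^ (a + 1 + b) * D * E, fun δ hδ => ?_⟩
  set F : ℝ → ℝ≥0∞ := fun s => ENNReal.ofReal s ^ (-a - 1) * max (ENNReal.ofReal s) δ ^ (-b)
  have hF : Measurable F := by fun_prop
  have h_growth {s : ℝ} (hs : 0 < s) : F s * ν {x | (u x : ℝ) ≤ s} ≤
      D * (ENNReal.ofReal s ^ (κ - a - 1) * max (ENNReal.ofReal s) δ ^ (-b)) := by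
    have h_eq : {x | (u x : ℝ) ≤ s} = {x | u x ≤ s.toNNReal} :=
      ext fun x => (Real.le_toNNReal_iff_coe_le hs.le).symm
    rw [h_eq, show κ - a - 1 = -a - 1 + κ by ring,
      ENNReal.rpow_add _ _ (ENNReal.ofReal_pos.2 hs).ne' ENNReal.ofReal_ne_top]
    calc _ ≤ F s * (D * ENNReal.ofReal s ^ κ) := mul_le_mul_right (hD _) _
      _ = _ := by ring
  calc _ ≤ ∫⁻ x, 2 ^ (a + 1 + b) * ∫⁻ s in Ici (u x : ℝ), F s ∂volume.restrict (Ioi 0) ∂ν :=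
        lintegral_mono_ae <| (hν.ae_ne_zero (ha.trans_lt haκ)).mono fun x hx =>
          rpow_mul_max_rpow_le_setLIntegral (by linarith) (by linarith) hx δ
    _ = 2 ^ (a + 1 + b) * ∫⁻ s in Ioi (0 : ℝ), F s * ν {x | (u x : ℝ) ≤ s} := by
        rw [lintegral_const_mul' _ _ (by finiteness),
          lintegral_setLIntegral_Ici_eq hu.coe_nnreal_real _ hF]
    _ ≤ 2 ^ (a + 1 + b) * ∫⁻ s in Ioi (0 : ℝ),
          D * (ENNReal.ofReal s ^ (κ - a - 1) * max (ENNReal.ofReal s) δ ^ (-b)) :=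
        mul_le_mul_right (setLIntegral_mono' measurableSet_Ioi fun s => h_growth) _
    _ ≤ 2 ^ (a + 1 + b) * (D * (E * (δ : ℝ≥0∞) ^ (κ - a - 1 + 1 - b))) := by
        rw [lintegral_const_mul' _ _ ENNReal.coe_ne_top]
        gcongr
        exact hE δ hδ
    _ = _ := by
        rw [sub_add_cancel]
        push_cast [ENNReal.coe_rpow_of_nonneg _ (show 0 ≤ a + 1 + b by linarith)]
        ring

theorem HasSublevelGrowth.lintegral_rpow_neg_lt_top [IsFiniteMeasure ν]
    (hν : HasSublevelGrowth ν u κ) (hu : Measurable u) (ha : 0 ≤ a) (haκ : a < κ) :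
    ∫⁻ x, (u x : ℝ≥0∞) ^ (-a) ∂ν < ⊤ := by
  obtain ⟨C, hC⟩ := hν.exists_lintegral_rpow_mul_max_rpow_le hu ha haκ
    (show κ < a + (κ + 1) by linarith)
  have h_pointwise (x : X) : (u x : ℝ≥0∞) ^ (-a) ≤
      1 + (u x : ℝ≥0∞) ^ (-a) * max (u x : ℝ≥0∞) 1 ^ (-(κ + 1)) := by
    rcases le_total (u x : ℝ≥0∞) 1 with hx | hx
    · rw [max_eq_right hx, ENNReal.one_rpow, mul_one]
      exact le_add_self
    · exact ((ennreal_rpow_le_rpow_of_nonpos (neg_nonpos.2 ha) hx).trans_eq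
        (ENNReal.one_rpow _)).trans le_self_add
  calc ∫⁻ x, (u x : ℝ≥0∞) ^ (-a) ∂ν
      ≤ ∫⁻ x, 1 + (u x : ℝ≥0∞) ^ (-a) * max (u x : ℝ≥0∞) 1 ^ (-(κ + 1)) ∂ν :=
        lintegral_mono h_pointwise
    _ ≤ ν univ + C * ((1 : ℝ≥0) : ℝ≥0∞) ^ (κ - a - (κ + 1)) := by
        rw [lintegral_add_left measurable_const, lintegral_one]
        gcongr
        exact hC 1 one_ne_zero
    _ < ⊤ := by
        rw [ENNReal.coe_one, ENNReal.one_rpow]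
        finiteness

theorem HasSublevelGrowth.exists_setLIntegral_rpow_neg_le (hν : HasSublevelGrowth ν u κ)
    (hκ : 0 ≤ κ) :
    ∃ C : ℝ≥0, ∀ s : ℝ≥0, s ≠ 0 →
      ∫⁻ x in {x | s ≤ 2 * u x ∧ u x ≤ 2 * s}, (u x : ℝ≥0∞) ^ (-κ) ∂ν ≤ C := by
  obtain ⟨C, hC⟩ := hν
  refine ⟨2 ^ κ * (2 ^ κ * C), fun s hs => ?_⟩
  have h_bound {x : X} (hx : s ≤ 2 * u x) : (u x : ℝ≥0∞) ^ (-κ) ≤ 2 ^ κ * (s : ℝ≥0∞) ^ (-κ) := by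
    rw [← two_rpow_mul_two_mul_rpow_neg]
    exact mul_le_mul_right
      (ennreal_rpow_le_rpow_of_nonpos (neg_nonpos.2 hκ) (by exact_mod_cast hx)) _
  have h_cancel : (s : ℝ≥0∞) ^ (-κ) * (s : ℝ≥0∞) ^ κ = 1 := by
    rw [← ENNReal.rpow_add _ _ (ENNReal.coe_ne_zero.2 hs) ENNReal.coe_ne_top, neg_add_cancel,
      ENNReal.rpow_zero]
  calc _ ≤ ∫⁻ x in {x | s ≤ 2 * u x ∧ u x ≤ 2 * s}, 2 ^ κ * (s : ℝ≥0∞) ^ (-κ) ∂ν :=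
        setLIntegral_mono measurable_const fun x hx => h_bound hx.1
    _ ≤ 2 ^ κ * (s : ℝ≥0∞) ^ (-κ) * (C * ((2 * s : ℝ≥0) : ℝ≥0∞) ^ κ) := by
        rw [setLIntegral_const]
        exact mul_le_mul_right ((measure_mono fun x hx => hx.2).trans (hC _)) _
    _ = _ := by
        rw [ENNReal.coe_mul, ENNReal.mul_rpow_of_nonneg _ _ hκ]
        push_cast [ENNReal.coe_rpow_of_nonneg _ hκ]
        calc _ = 2 ^ κ * (2 ^ κ * C) * ((s : ℝ≥0∞) ^ (-κ) * (s : ℝ≥0∞) ^ κ) := by ring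
          _ = _ := by rw [h_cancel, mul_one]

end SublevelGrowth

section Schur

variable {X Y : Type*} [MeasurableSpace X] [MeasurableSpace Y] {ν : Measure X} {μ : Measure Y}

theorem rpow_lintegral_mul_le_of_lintegral_mul_rpow_le {p q : ℝ} (hpq : p.HolderConjugate q)
    {k h φ : Y → ℝ≥0∞} {A : ℝ≥0∞} (hk : AEMeasurable k μ) (hh : AEMeasurable h μ)
    (hφ : AEMeasurable φ μ) (hh_pos : ∀ᵐ y ∂μ, h y ≠ 0) (hh_top : ∀ᵐ y ∂μ, h y ≠ ⊤)
    (hA : ∫⁻ y, k y * h y ^ q ∂μ ≤ A) :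
    (∫⁻ y, k y * φ y ∂μ) ^ p ≤ A ^ (p / q) * ∫⁻ y, k y * (φ y / h y) ^ p ∂μ := by
  have h_pow (k' f : ℝ≥0∞) {r : ℝ} (hr : 0 < r) : (k' ^ (1 / r) * f) ^ r = k' * f ^ r := by
    rw [ENNReal.mul_rpow_of_nonneg _ _ hr.le, one_div, ENNReal.rpow_inv_rpow hr.ne']
  have h_factor : ∀ᵐ y ∂μ,
      k y * φ y = (k y ^ (1 / p) * (φ y / h y)) * (k y ^ (1 / q) * h y) := by
    filter_upwards [hh_pos, hh_top] with y h_pos h_top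
    rw [mul_mul_mul_comm, ENNReal.div_mul_cancel h_pos h_top,
      ← ENNReal.rpow_add_of_nonneg _ _ hpq.one_div_nonneg hpq.symm.one_div_nonneg,
      hpq.one_div_add_one_div, div_one, ENNReal.rpow_one]
  have h_holder : ∫⁻ y, k y * φ y ∂μ ≤
      (∫⁻ y, k y * (φ y / h y) ^ p ∂μ) ^ (1 / p) * A ^ (1 / q) := by
    calc ∫⁻ y, k y * φ y ∂μ
        = ∫⁻ y, (k y ^ (1 / p) * (φ y / h y)) * (k y ^ (1 / q) * h y) ∂μ :=
          lintegral_congr_ae h_factor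
      _ ≤ (∫⁻ y, (k y ^ (1 / p) * (φ y / h y)) ^ p ∂μ) ^ (1 / p) *
            (∫⁻ y, (k y ^ (1 / q) * h y) ^ q ∂μ) ^ (1 / q) :=
          ENNReal.lintegral_mul_le_Lp_mul_Lq μ hpq
            ((hk.pow_const _).mul (hφ.div hh)) ((hk.pow_const _).mul hh)
      _ ≤ (∫⁻ y, k y * (φ y / h y) ^ p ∂μ) ^ (1 / p) * A ^ (1 / q) := by
          simp only [h_pow _ _ hpq.pos, h_pow _ _ hpq.symm.pos]
          gcongr
          exact hpq.symm.one_div_nonneg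
  calc (∫⁻ y, k y * φ y ∂μ) ^ p
      ≤ ((∫⁻ y, k y * (φ y / h y) ^ p ∂μ) ^ (1 / p) * A ^ (1 / q)) ^ p :=
        ENNReal.rpow_le_rpow h_holder hpq.nonneg
    _ = A ^ (p / q) * ∫⁻ y, k y * (φ y / h y) ^ p ∂μ := by
        rw [mul_comm, ENNReal.mul_rpow_of_nonneg _ _ hpq.nonneg, ← ENNReal.rpow_mul,
          ← ENNReal.rpow_mul, one_div_mul_cancel hpq.ne_zero, ENNReal.rpow_one, one_div_mul_eq_div]

theorem lintegral_mul_lintegral_kernel_swap [SFinite ν] [SFinite μ] {K : X → Y → ℝ≥0∞}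
    (hK : Measurable (Function.uncurry K)) {g : X → ℝ≥0∞} (hg : Measurable g) {φ : Y → ℝ≥0∞}
    (hφ : AEMeasurable φ μ) :
    ∫⁻ x, g x * ∫⁻ y, K x y * φ y ∂μ ∂ν = ∫⁻ y, φ y * ∫⁻ x, K x y * g x ∂ν ∂μ := by
  have h_meas : AEMeasurable (Function.uncurry fun x y => g x * (K x y * φ y)) (ν.prod μ) :=
    (hg.comp measurable_fst).aemeasurable.mul (hK.aemeasurable.mul hφ.comp_snd)
  calc ∫⁻ x, g x * ∫⁻ y, K x y * φ y ∂μ ∂ν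
      = ∫⁻ x, ∫⁻ y, g x * (K x y * φ y) ∂μ ∂ν := lintegral_congr fun x =>
        (lintegral_const_mul'' _ (hK.of_uncurry_left.aemeasurable.mul hφ)).symm
    _ = ∫⁻ y, ∫⁻ x, φ y * (K x y * g x) ∂ν ∂μ := by
        rw [lintegral_lintegral_swap h_meas]
        simp only [mul_left_comm, mul_comm]
    _ = ∫⁻ y, φ y * ∫⁻ x, K x y * g x ∂ν ∂μ := lintegral_congr fun y =>
        lintegral_const_mul _ (hK.of_uncurry_right.mul hg)

theorem lintegral_rpow_lintegral_kernel_le_of_schur [SFinite ν] [SFinite μ] {p q : ℝ}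
    (hpq : p.HolderConjugate q) {K : X → Y → ℝ≥0∞} (hK : Measurable (Function.uncurry K))
    {g : X → ℝ≥0∞} (hg : Measurable g) {h w : Y → ℝ≥0∞} (hh : Measurable h)
    (hh_pos : ∀ᵐ y ∂μ, h y ≠ 0) (hh_top : ∀ᵐ y ∂μ, h y ≠ ⊤) {A B : ℝ≥0}
    (hA : ∀ᵐ x ∂ν, ∫⁻ y, K x y * h y ^ q ∂μ ≤ A * g x ^ q)
    (hB : ∀ᵐ y ∂μ, ∫⁻ x, K x y * g x ^ p ∂ν ≤ B * (h y ^ p * w y))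
    {φ : Y → ℝ≥0∞} (hφ : AEMeasurable φ μ) :
    ∫⁻ x, (∫⁻ y, K x y * φ y ∂μ) ^ p ∂ν ≤
      (A : ℝ≥0∞) ^ (p / q) * B * ∫⁻ y, φ y ^ p * w y ∂μ := by
  have h_div : 0 ≤ p / q := div_nonneg hpq.nonneg hpq.symm.nonneg
  have h_holder : ∀ᵐ x ∂ν, (∫⁻ y, K x y * φ y ∂μ) ^ p ≤
      (A : ℝ≥0∞) ^ (p / q) * (g x ^ p * ∫⁻ y, K x y * (φ y / h y) ^ p ∂μ) := by
    filter_upwards [hA] with x hx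
    refine (rpow_lintegral_mul_le_of_lintegral_mul_rpow_le hpq hK.of_uncurry_left.aemeasurable
      hh.aemeasurable hφ hh_pos hh_top hx).trans_eq ?_
    rw [ENNReal.mul_rpow_of_nonneg _ _ h_div, ← ENNReal.rpow_mul,
      mul_div_cancel₀ _ hpq.symm.ne_zero, mul_assoc]
  calc ∫⁻ x, (∫⁻ y, K x y * φ y ∂μ) ^ p ∂ν
      ≤ ∫⁻ x, (A : ℝ≥0∞) ^ (p / q) * (g x ^ p * ∫⁻ y, K x y * (φ y / h y) ^ p ∂μ) ∂ν :=
        lintegral_mono_ae h_holder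
    _ = (A : ℝ≥0∞) ^ (p / q) * ∫⁻ y, (φ y / h y) ^ p * ∫⁻ x, K x y * g x ^ p ∂ν ∂μ := by
        rw [lintegral_const_mul' _ _ (ENNReal.rpow_ne_top_of_nonneg h_div ENNReal.coe_ne_top)]
        exact congrArg _ (lintegral_mul_lintegral_kernel_swap hK (hg.pow_const p)
          ((hφ.div hh.aemeasurable).pow_const p))
    _ ≤ (A : ℝ≥0∞) ^ (p / q) * ∫⁻ y, B * (φ y ^ p * w y) ∂μ := by
        refine mul_le_mul_right (lintegral_mono_ae ?_) _
        filter_upwards [hB, hh_pos, hh_top] with y hy h_pos h_top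
        calc _ ≤ (φ y / h y) ^ p * (B * (h y ^ p * w y)) := mul_le_mul_right hy _
          _ = B * ((φ y / h y * h y) ^ p * w y) := by
              rw [ENNReal.mul_rpow_of_nonneg _ _ hpq.nonneg]
              ring
          _ = B * (φ y ^ p * w y) := by rw [ENNReal.div_mul_cancel h_pos h_top]
    _ = _ := by rw [lintegral_const_mul' _ _ ENNReal.coe_ne_top, mul_assoc]

end Schur

section SublevelGrowthPair

variable {X Y : Type*} [MeasurableSpace X] [MeasurableSpace Y] {ν : Measure X} {μ : Measure Y}
  {u : X → ℝ≥0} {v : Y → ℝ≥0} {p κ : ℝ}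

theorem exists_lintegral_rpow_lintegral_inv_max_le [SFinite ν] [SFinite μ]
    (hν : HasSublevelGrowth ν u κ) (hu : Measurable u) (hμ : HasSublevelGrowth μ v 1)
    (hv : Measurable v) (hp : 1 < p) (hκ : 0 < κ) (hκp : κ < p) :
    ∃ C : ℝ≥0, ∀ φ : Y → ℝ≥0∞, AEMeasurable φ μ →
      ∫⁻ x, (∫⁻ y, (max (u x : ℝ≥0∞) (v y))⁻¹ * φ y ∂μ) ^ p ∂ν ≤
        C * ∫⁻ y, φ y ^ p * (v y : ℝ≥0∞) ^ (κ - 1) ∂μ := by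
  obtain ⟨a, ha_lower, ha_upper⟩ : ∃ a, max (κ - 1) 0 < a ∧ a < min κ (p - 1) :=
    exists_between (max_lt (lt_min (by linarith) (by linarith)) (lt_min hκ (by linarith)))
  obtain ⟨haκ, ha_pos⟩ := max_lt_iff.1 ha_lower
  obtain ⟨ha_lt, hap⟩ := lt_min_iff.1 ha_upper
  have hpq : p.HolderConjugate p.conjExponent := .conjExponent hp
  have h_exp_p : -(a / p) * p = -a := by field_simp
  have h_exp_q : -(a / p) * p.conjExponent = -(a / (p - 1)) := by
    rw [Real.conjExponent]
    field_simp
  have ha_div : 0 < a / (p - 1) := div_pos ha_pos (by linarith)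
  obtain ⟨A, hA⟩ := hμ.exists_lintegral_rpow_mul_max_rpow_le hv ha_div.le
    ((div_lt_one (by linarith)).2 hap) (b := 1) (by linarith)
  obtain ⟨B, hB⟩ := hν.exists_lintegral_rpow_mul_max_rpow_le hu ha_pos.le ha_lt (b := 1)
    (by linarith)
  refine ⟨A ^ (p / p.conjExponent) * B, fun φ hφ => ?_⟩
  rw [ENNReal.coe_mul,
    ENNReal.coe_rpow_of_nonneg _ (div_nonneg hpq.nonneg hpq.symm.nonneg)]
  refine lintegral_rpow_lintegral_kernel_le_of_schur hpq (by fun_prop)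
    (g := fun x => (u x : ℝ≥0∞) ^ (-(a / p))) (by fun_prop)
    (h := fun y => (v y : ℝ≥0∞) ^ (-(a / p))) (by fun_prop) ?_ ?_ ?_ ?_ hφ
  · exact Eventually.of_forall fun y => by
      simpa [ENNReal.rpow_eq_zero_iff] using fun _ => (div_pos ha_pos hpq.pos).le
  · filter_upwards [hμ.ae_ne_zero one_pos] with y hy
    exact ENNReal.rpow_ne_top_of_ne_zero (ENNReal.coe_ne_zero.2 hy) ENNReal.coe_ne_top
  · filter_upwards [hν.ae_ne_zero hκ] with x hx
    simpa only [← ENNReal.rpow_mul, h_exp_q, ENNReal.rpow_neg_one, max_comm, mul_comm,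
      sub_sub_cancel_left, sub_right_comm] using hA (u x) hx
  · filter_upwards [hμ.ae_ne_zero one_pos] with y hy
    rw [← ENNReal.rpow_mul, h_exp_p, ← ENNReal.rpow_add _ _ (ENNReal.coe_ne_zero.2 hy)
      ENNReal.coe_ne_top, show -a + (κ - 1) = κ - a - 1 by ring]
    simpa only [← ENNReal.rpow_mul, h_exp_p, ENNReal.rpow_neg_one, mul_comm] using hB (v y) hy

theorem HasSublevelGrowth.exists_lintegral_rpow_neg_mul_setLIntegral_le [SFinite ν] [SFinite μ]
    (hμ : HasSublevelGrowth μ v κ) (hκ : 0 ≤ κ) (hu : Measurable u) (hv : Measurable v)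
    (hu_ne : ∀ᵐ x ∂ν, u x ≠ 0) :
    ∃ C : ℝ≥0, ∀ g : X → ℝ≥0∞, AEMeasurable g ν →
      ∫⁻ y, (v y : ℝ≥0∞) ^ (-κ) * ∫⁻ x in {x | u x ≤ 2 * v y ∧ v y ≤ 2 * u x}, g x ∂ν ∂μ ≤
        C * ∫⁻ x, g x ∂ν := by
  obtain ⟨C, hC⟩ := hμ.exists_setLIntegral_rpow_neg_le hκ
  refine ⟨C, fun g hg => ?_⟩
  set S : Set (Y × X) := {z | u z.2 ≤ 2 * v z.1 ∧ v z.1 ≤ 2 * u z.2}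
  have hS : MeasurableSet S :=
    (measurableSet_le (by fun_prop) (by fun_prop)).inter
      (measurableSet_le (by fun_prop) (by fun_prop))
  have h_weight : Measurable fun z : Y × X => (v z.1 : ℝ≥0∞) ^ (-κ) := by fun_prop
  calc ∫⁻ y, (v y : ℝ≥0∞) ^ (-κ) * ∫⁻ x in {x | u x ≤ 2 * v y ∧ v y ≤ 2 * u x}, g x ∂ν ∂μ
      ≤ ∫⁻ y, ∫⁻ x, S.indicator (fun z => (v z.1 : ℝ≥0∞) ^ (-κ) * g z.2) (y, x) ∂ν ∂μ := by
        refine lintegral_mono fun y => (lintegral_const_mul_le _ _).trans_eq ?_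
        exact (lintegral_indicator (measurable_prodMk_left hS) _).symm
    _ = ∫⁻ x, ∫⁻ y, S.indicator (fun z => (v z.1 : ℝ≥0∞) ^ (-κ) * g z.2) (y, x) ∂μ ∂ν :=
        lintegral_lintegral_swap ((h_weight.aemeasurable.mul hg.comp_snd).indicator hS)
    _ = ∫⁻ x, (∫⁻ y in {y | u x ≤ 2 * v y ∧ v y ≤ 2 * u x}, (v y : ℝ≥0∞) ^ (-κ) ∂μ) * g x ∂ν := by
        refine lintegral_congr fun x => ?_
        rw [← lintegral_mul_const _ (by fun_prop)]
        exact lintegral_indicator (measurable_prodMk_right hS) _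
    _ ≤ ∫⁻ x, C * g x ∂ν :=
        lintegral_mono_ae <| hu_ne.mono fun x hx => mul_le_mul_left (hC (u x) hx) _
    _ = C * ∫⁻ x, g x ∂ν := lintegral_const_mul' _ _ ENNReal.coe_ne_top

end SublevelGrowthPair

section MeanValue

variable {E : Type*} [NormedAddCommGroup E] [NormedSpace ℂ E] [CompleteSpace E]
  {f : ℂ → E} {c : ℂ} {r ρ p : ℝ}

theorem lintegral_eq_lintegral_circleMap (c : ℂ) {g : ℂ → ℝ≥0∞} (hg : Measurable g) :
    ∫⁻ z, g z = ∫⁻ r in Ioi (0 : ℝ), ENNReal.ofReal r *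
      ∫⁻ θ in Ioo (-Real.pi) Real.pi, g (circleMap c r θ) := by
  have h_symm (x : ℝ × ℝ) : c + Complex.polarCoord.symm x = circleMap c x.1 x.2 := by
    rw [Complex.polarCoord_symm_apply, circleMap, Complex.exp_mul_I]
    push_cast
    rfl
  have h_meas : Measurable fun x : ℝ × ℝ => ENNReal.ofReal x.1 * g (circleMap c x.1 x.2) := by
    have : Measurable fun x : ℝ × ℝ => circleMap c x.1 x.2 := by
      simp only [circleMap]
      fun_prop
    fun_prop
  rw [← lintegral_add_left_eq_self g c, ← Complex.lintegral_comp_polarCoord_symm]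
  simp only [h_symm, smul_eq_mul]
  rw [polarCoord_target, Measure.volume_eq_prod, setLIntegral_prod _ h_meas.aemeasurable]
  exact lintegral_congr fun r => lintegral_const_mul' _ _ ENNReal.ofReal_ne_top

theorem setLIntegral_enorm_center_le_circleMap (hf : DifferentiableOn ℂ f (closedBall c |r|)) :
    ∫⁻ _ in Ioo (-Real.pi) Real.pi, ‖f c‖ₑ ≤
      ∫⁻ θ in Ioo (-Real.pi) Real.pi, ‖f (circleMap c r θ)‖ₑ := by
  have h_pi : 0 < 2 * Real.pi := Real.two_pi_pos
  have h_mean : ∫ θ in Ioo (-Real.pi) Real.pi, f (circleMap c r θ) = (2 * Real.pi) • f c := by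
    have h_average := (hf.mono closure_ball_subset_closedBall).diffContOnCl.circleAverage
    rw [Real.circleAverage_eq_integral_add (-Real.pi),
      intervalIntegral.integral_comp_add_right (fun θ => f (circleMap c r θ)), zero_add,
      show 2 * Real.pi + -Real.pi = Real.pi by ring, intervalIntegral.integral_of_le (by linarith),
      integral_Ioc_eq_integral_Ioo, inv_smul_eq_iff₀ h_pi.ne'] at h_average
    exact h_average
  calc ∫⁻ _ in Ioo (-Real.pi) Real.pi, ‖f c‖ₑ
      = ‖∫ θ in Ioo (-Real.pi) Real.pi, f (circleMap c r θ)‖ₑ := by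
        rw [setLIntegral_const, Real.volume_Ioo, h_mean, enorm_smul, Real.enorm_of_nonneg h_pi.le,
          mul_comm, sub_neg_eq_add, two_mul]
    _ ≤ _ := enorm_integral_le_lintegral_enorm _

theorem enorm_center_mul_volume_ball_le (hf : DifferentiableOn ℂ f (ball c ρ)) :
    ‖f c‖ₑ * volume (ball c ρ) ≤ ∫⁻ z in ball c ρ, ‖f z‖ₑ := by
  have h_meas : Measurable ((ball c ρ).indicator fun z => ‖f z‖ₑ) := by
    classical
    rw [← Set.piecewise_eq_indicator]
    exact hf.continuousOn.enorm.measurable_piecewise continuousOn_const measurableSet_ball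
  rw [← setLIntegral_const, ← lintegral_indicator measurableSet_ball,
    ← lintegral_indicator measurableSet_ball, lintegral_eq_lintegral_circleMap c h_meas,
    lintegral_eq_lintegral_circleMap c (measurable_const.indicator measurableSet_ball)]
  refine setLIntegral_mono' measurableSet_Ioi fun r hr => mul_le_mul_right ?_ _
  have h_mem (θ : ℝ) : circleMap c r θ ∈ ball c ρ ↔ r < ρ := by
    simp [circleMap, dist_eq_norm, abs_of_pos (mem_Ioi.1 hr)]
  by_cases hrρ : r < ρ
  · simp only [indicator_of_mem ((h_mem _).2 hrρ)]
    refine setLIntegral_enorm_center_le_circleMap (hf.mono (closedBall_subset_ball ?_))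
    rwa [abs_of_pos hr]
  · simp only [indicator_of_notMem (mt (h_mem _).1 hrρ), le_refl]

theorem enorm_rpow_center_mul_volume_ball_le (hp : 1 ≤ p) (hf : DifferentiableOn ℂ f (ball c ρ)) :
    ‖f c‖ₑ ^ p * volume (ball c ρ) ≤ ∫⁻ z in ball c ρ, ‖f z‖ₑ ^ p := by
  have hp_pos : 0 < p := by linarith
  rcases le_or_gt ρ 0 with hρ | hρ
  · rw [ball_eq_empty.2 hρ, measure_empty, mul_zero]
    exact zero_le
  set V := volume (ball c ρ)
  have hV_pos : V ≠ 0 := (measure_ball_pos _ _ hρ).ne'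
  have hV_top : V ≠ ⊤ := measure_ball_lt_top.ne
  have h_jensen : ∫⁻ z in ball c ρ, ‖f z‖ₑ ≤
      (∫⁻ z in ball c ρ, ‖f z‖ₑ ^ p) ^ (1 / p) * V ^ (1 - 1 / p) := by
    simpa only [eLpNorm', ENNReal.rpow_one, div_one, Measure.restrict_apply_univ] using
      eLpNorm'_le_eLpNorm'_mul_rpow_measure_univ one_pos hp
      (hf.continuousOn.aestronglyMeasurable measurableSet_ball (μ := volume))
  have h_rpow : V = V ^ (1 / p) * V ^ (1 - 1 / p) := by
    rw [← ENNReal.rpow_add _ _ hV_pos hV_top, add_sub_cancel, ENNReal.rpow_one]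
  have h_cancel : ‖f c‖ₑ * V ^ (1 / p) ≤ (∫⁻ z in ball c ρ, ‖f z‖ₑ ^ p) ^ (1 / p) := by
    refine (ENNReal.mul_le_mul_iff_left (c := V ^ (1 - 1 / p)) ?_ ?_).1 ?_
    · exact (ENNReal.rpow_pos (pos_iff_ne_zero.2 hV_pos) hV_top).ne'
    · exact ENNReal.rpow_ne_top_of_ne_zero hV_pos hV_top
    · rw [mul_assoc, ← h_rpow]
      exact (enorm_center_mul_volume_ball_le hf).trans h_jensen
  calc ‖f c‖ₑ ^ p * V = (‖f c‖ₑ * V ^ (1 / p)) ^ p := by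
        rw [ENNReal.mul_rpow_of_nonneg _ _ hp_pos.le, one_div, ENNReal.rpow_inv_rpow hp_pos.ne']
    _ ≤ ((∫⁻ z in ball c ρ, ‖f z‖ₑ ^ p) ^ (1 / p)) ^ p := by gcongr
    _ = ∫⁻ z in ball c ρ, ‖f z‖ₑ ^ p := by rw [one_div, ENNReal.rpow_inv_rpow hp_pos.ne']

end MeanValue

theorem abs_le_pi_mul_norm_one_sub_circleMap {r θ : ℝ} (hr : 0 ≤ r) (hθ : |θ| ≤ Real.pi) :
    |θ| ≤ Real.pi * ‖1 - circleMap 0 r θ‖ := by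
  have h_sin : 2 / Real.pi * |θ| ≤ ‖1 - Complex.exp (θ * Complex.I)‖ := by
    have h_half : |θ / 2| ≤ Real.pi / 2 := by
      rw [abs_div, abs_two]
      linarith
    calc 2 / Real.pi * |θ| = 2 * (2 / Real.pi * |θ / 2|) := by
          rw [abs_div, abs_two]
          ring
      _ ≤ 2 * |Real.sin (θ / 2)| := by gcongr; exact Real.mul_abs_le_abs_sin h_half
      _ = ‖1 - Complex.exp (θ * Complex.I)‖ := by
          rw [norm_sub_rev, mul_comm (θ : ℂ), Complex.norm_exp_I_mul_ofReal_sub_one, norm_mul,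
            Real.norm_ofNat, Real.norm_eq_abs]
  have h_radial : ‖circleMap 0 r θ - Complex.exp (θ * Complex.I)‖ ≤ ‖1 - circleMap 0 r θ‖ := by
    calc ‖circleMap 0 r θ - Complex.exp (θ * Complex.I)‖
        = |‖(1 : ℂ)‖ - ‖circleMap 0 r θ‖| := by
          rw [circleMap_zero, ← sub_one_mul, norm_mul, Complex.norm_exp_ofReal_mul_I, mul_one,
            norm_mul, Complex.norm_exp_ofReal_mul_I, norm_one, mul_one, Complex.norm_of_nonneg hr,
            abs_sub_comm, ← Complex.ofReal_one, ← Complex.ofReal_sub, Complex.norm_real,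
            Real.norm_eq_abs]
      _ ≤ ‖1 - circleMap 0 r θ‖ := abs_norm_sub_norm_le _ _
  have h_triangle := norm_sub_le_norm_sub_add_norm_sub (1 : ℂ) (circleMap 0 r θ)
    (Complex.exp (θ * Complex.I))
  calc |θ| = Real.pi / 2 * (2 / Real.pi * |θ|) := by field_simp
    _ ≤ Real.pi / 2 * (2 * ‖1 - circleMap 0 r θ‖) :=
        mul_le_mul_of_nonneg_left (by linarith) (by positivity)
    _ = Real.pi * ‖1 - circleMap 0 r θ‖ := by ring

theorem rpow_le_rpow_abs_mul_rpow {x y M : ℝ} (α : ℝ) (hx : 0 < x) (hy : 0 < y) (hM : 0 < M)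
    (hxy : x ≤ M * y) (hyx : y ≤ M * x) : x ^ α ≤ M ^ |α| * y ^ α := by
  rcases le_or_gt 0 α with hα | hα
  · rw [abs_of_nonneg hα, ← Real.mul_rpow hM.le hy.le]
    exact Real.rpow_le_rpow hx.le hxy hα
  · calc x ^ α = M ^ (-α) * (M * x) ^ α := by
          rw [Real.mul_rpow hM.le hx.le, ← mul_assoc, ← Real.rpow_add hM, neg_add_cancel,
            Real.rpow_zero, one_mul]
      _ ≤ M ^ |α| * y ^ α := by
          rw [abs_of_neg hα]
          exact mul_le_mul_of_nonneg_left (Real.rpow_le_rpow_of_nonpos hy hyx hα.le)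
            (by positivity)

section BergmanMeasure

variable {α p : ℝ}

/-- The probability measure `dA_α = (α + 1) (1 - |z|²)^α dA` on the unit disc; the factor `1 / π`
from `dA` is part of the density with respect to Lebesgue measure. -/
noncomputable def bergmanMeasure (α : ℝ) : Measure ℂ :=
  (volume.restrict (ball 0 1)).withDensity fun z =>
    ENNReal.ofReal ((α + 1) / Real.pi * (1 - ‖z‖ ^ 2) ^ α)

instance : SFinite (bergmanMeasure α) := by
  unfold bergmanMeasure
  infer_instance

theorem measurable_bergmanMeasure_density :
    Measurable fun z : ℂ => ENNReal.ofReal ((α + 1) / Real.pi * (1 - ‖z‖ ^ 2) ^ α) := by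
  fun_prop

theorem ae_bergmanMeasure_mem_ball : ∀ᵐ z ∂bergmanMeasure α, z ∈ ball (0 : ℂ) 1 :=
  (withDensity_absolutelyContinuous _ _).ae_le (ae_restrict_mem measurableSet_ball)

theorem bergmanNorm_eq (hp : 0 ≤ p) (hα : -1 < α) (f : ℂ → ℂ) :
    bergmanNorm p α f = (∫⁻ z, ‖f z‖ₑ ^ p ∂bergmanMeasure α) ^ (1 / p) := by
  have h_density {z : ℂ} (hz : z ∈ ball (0 : ℂ) 1) :
      ENNReal.ofReal ((α + 1) / Real.pi * (1 - ‖z‖ ^ 2) ^ α) * ‖f z‖ₑ ^ p =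
        ENNReal.ofReal (α + 1) * (ENNReal.ofReal Real.pi)⁻¹ *
          ENNReal.ofReal ((1 - ‖z‖ ^ 2) ^ α * ‖f z‖ ^ p) := by
    have h_pos : 0 ≤ 1 - ‖z‖ ^ 2 := by
      have := mem_ball_zero_iff.1 hz
      nlinarith [norm_nonneg z]
    rw [← ofReal_norm, ENNReal.ofReal_rpow_of_nonneg (norm_nonneg _) hp,
      ENNReal.ofReal_mul (div_nonneg (by linarith) Real.pi_pos.le),
      ENNReal.ofReal_div_of_pos Real.pi_pos,
      ENNReal.ofReal_mul (by positivity), div_eq_mul_inv, mul_assoc _ _ (ENNReal.ofReal _)]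
  rw [bergmanNorm, bergmanMeasure, lintegral_withDensity_eq_lintegral_mul_non_measurable _
    measurable_bergmanMeasure_density (Eventually.of_forall fun _ => ENNReal.ofReal_lt_top)]
  simp only [Pi.mul_apply]
  rw [setLIntegral_congr_fun measurableSet_ball fun z => h_density,
    lintegral_const_mul' _ _ (by finiteness), dA, Measure.restrict_smul, lintegral_smul_measure,
    smul_eq_mul, mul_assoc]

theorem bergmanNorm_rpow (hp : 0 < p) (hα : -1 < α) (f : ℂ → ℂ) :
    bergmanNorm p α f ^ p = ∫⁻ z, ‖f z‖ₑ ^ p ∂bergmanMeasure α := by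
  rw [bergmanNorm_eq hp.le hα, one_div, ENNReal.rpow_inv_rpow hp.ne']

theorem bergmanMeasure_density_le (hα : -1 < α) {z : ℂ} (hz : z ∈ ball (0 : ℂ) 1) :
    ENNReal.ofReal ((α + 1) / Real.pi * (1 - ‖z‖ ^ 2) ^ α) ≤
      ENNReal.ofReal ((α + 1) / Real.pi * 2 ^ |α|) * ENNReal.ofReal (1 - ‖z‖) ^ α := by
  have hz' : 0 < 1 - ‖z‖ := sub_pos.2 (mem_ball_zero_iff.1 hz)
  have h_nonneg : 0 ≤ (α + 1) / Real.pi := div_nonneg (by linarith) Real.pi_pos.le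
  rw [ENNReal.ofReal_rpow_of_pos hz', ← ENNReal.ofReal_mul (by positivity), mul_assoc]
  refine ENNReal.ofReal_le_ofReal (mul_le_mul_of_nonneg_left ?_ h_nonneg)
  have := norm_nonneg z
  exact rpow_le_rpow_abs_mul_rpow α (by nlinarith) hz' two_pos (by nlinarith) (by nlinarith)

theorem indicator_density_circleMap_le (hα : -1 < α) (s : ℝ) {r θ : ℝ} (hr : 0 < r)
    (hθ : |θ| ≤ Real.pi) :
    {z ∈ ball (0 : ℂ) 1 | ‖1 - z‖ ≤ s}.indicator
        (fun z => ENNReal.ofReal ((α + 1) / Real.pi * (1 - ‖z‖ ^ 2) ^ α)) (circleMap 0 r θ) ≤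
      (Icc (-(Real.pi * s)) (Real.pi * s)).indicator (fun _ =>
        ENNReal.ofReal ((α + 1) / Real.pi * 2 ^ |α|) *
          (Ioc 0 s).indicator (fun x => ENNReal.ofReal x ^ α) (1 - r)) θ := by
  refine indicator_apply_le' (fun hz => ?_) (fun _ => zero_le)
  obtain ⟨h_ball, h_near⟩ := hz
  have h_norm : ‖circleMap 0 r θ‖ = r := by rw [norm_circleMap_zero, abs_of_pos hr]
  have h_angle : |θ| ≤ Real.pi * s :=
    (abs_le_pi_mul_norm_one_sub_circleMap hr.le hθ).trans (by gcongr)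
  have h_radius : 1 - r ∈ Ioc 0 s := by
    have h_lt := mem_ball_zero_iff.1 h_ball
    have h_sub := norm_sub_norm_le 1 (circleMap 0 r θ)
    rw [h_norm] at h_lt h_sub
    rw [norm_one] at h_sub
    exact ⟨by linarith, by linarith⟩
  rw [indicator_of_mem (mem_Icc.2 (abs_le.1 h_angle)), indicator_of_mem h_radius]
  simpa only [h_norm] using bergmanMeasure_density_le hα h_ball

theorem bergmanMeasure_setOf_norm_one_sub_le (hα : -1 < α) (s : ℝ) :
    bergmanMeasure α {z | ‖1 - z‖ ≤ s} ≤ ENNReal.ofReal ((α + 1) / Real.pi * 2 ^ |α|) *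
      ENNReal.ofReal (2 * Real.pi * s) * ∫⁻ x in Ioc 0 s, ENNReal.ofReal x ^ α := by
  set D := ENNReal.ofReal ((α + 1) / Real.pi * 2 ^ |α|)
  set density : ℂ → ℝ≥0∞ := fun z => ENNReal.ofReal ((α + 1) / Real.pi * (1 - ‖z‖ ^ 2) ^ α)
  set radial : ℝ → ℝ≥0∞ := (Ioc 0 s).indicator fun x => ENNReal.ofReal x ^ α
  have h_meas : MeasurableSet {z : ℂ | ‖1 - z‖ ≤ s} :=
    measurableSet_le (by fun_prop) measurable_const
  have h_inter : {z : ℂ | ‖1 - z‖ ≤ s} ∩ ball 0 1 = {z ∈ ball 0 1 | ‖1 - z‖ ≤ s} := inter_comm _ _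
  have h_radial (r : ℝ) : ENNReal.ofReal r * radial (1 - r) ≤ radial (1 - r) := by
    by_cases hr : 1 - r ∈ Ioc 0 s
    · exact mul_le_of_le_one_left' (ENNReal.ofReal_le_one.2 (by linarith [hr.1]))
    · simp only [radial, indicator_of_notMem hr, mul_zero, le_refl]
  calc bergmanMeasure α {z | ‖1 - z‖ ≤ s}
      = ∫⁻ z, {z ∈ ball 0 1 | ‖1 - z‖ ≤ s}.indicator density z := by
        rw [bergmanMeasure, withDensity_apply _ h_meas, Measure.restrict_restrict h_meas, ← h_inter,
          lintegral_indicator (h_meas.inter measurableSet_ball)]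
    _ = ∫⁻ r in Ioi (0 : ℝ), ENNReal.ofReal r * ∫⁻ θ in Ioo (-Real.pi) Real.pi,
          {z ∈ ball 0 1 | ‖1 - z‖ ≤ s}.indicator density (circleMap 0 r θ) :=
        lintegral_eq_lintegral_circleMap 0 <|
          measurable_bergmanMeasure_density.indicator (measurableSet_ball.inter h_meas)
    _ ≤ ∫⁻ r in Ioi (0 : ℝ), ENNReal.ofReal r * ∫⁻ θ,
          (Icc (-(Real.pi * s)) (Real.pi * s)).indicator (fun _ => D * radial (1 - r)) θ := by
        refine setLIntegral_mono' measurableSet_Ioi fun r hr => mul_le_mul_right ?_ _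
        exact (setLIntegral_mono' measurableSet_Ioo fun θ hθ =>
          indicator_density_circleMap_le hα s hr (abs_lt.2 hθ).le).trans
            (setLIntegral_le_lintegral _ _)
    _ ≤ ∫⁻ r, D * ENNReal.ofReal (2 * Real.pi * s) * radial (1 - r) := by
        refine (setLIntegral_le_lintegral _ _).trans (lintegral_mono fun r => ?_)
        rw [lintegral_indicator_const measurableSet_Icc, Real.volume_Icc, sub_neg_eq_add,
          ← two_mul, ← mul_assoc 2]
        calc _ = D * ENNReal.ofReal (2 * Real.pi * s) * (ENNReal.ofReal r * radial (1 - r)) := by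
              ring
          _ ≤ _ := mul_le_mul_right (h_radial r) _
    _ = D * ENNReal.ofReal (2 * Real.pi * s) * ∫⁻ x in Ioc 0 s, ENNReal.ofReal x ^ α := by
        rw [lintegral_const_mul' _ _ (by finiteness), lintegral_sub_left_eq_self radial,
          lintegral_indicator measurableSet_Ioc]

theorem hasSublevelGrowth_bergmanMeasure (hα : -1 < α) :
    HasSublevelGrowth (bergmanMeasure α) (fun z => ‖1 - z‖₊) (α + 2) := by
  have hα_pos : 0 < α + 1 := by linarith
  refine ⟨((α + 1) / Real.pi * 2 ^ |α| * (2 * Real.pi * (α + 1)⁻¹)).toNNReal, fun s => ?_⟩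
  refine (bergmanMeasure_setOf_norm_one_sub_le hα s).trans_eq ?_
  rw [setLIntegral_Ioc_rpow hα s.coe_nonneg, ← ENNReal.ofReal_mul (by positivity),
    ← ENNReal.ofReal_mul (by positivity), ← ENNReal.ofReal_coe_nnreal (p := s),
    ENNReal.ofReal_rpow_of_nonneg s.coe_nonneg (by linarith), ← ENNReal.ofReal,
    ← ENNReal.ofReal_mul (by positivity), show α + 2 = 1 + (α + 1) by ring,
    Real.rpow_one_add' s.coe_nonneg (by linarith)]
  ring_nf

end BergmanMeasure

section PointwiseGrowth

variable {α p : ℝ}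

theorem ball_half_one_sub_norm_subset {w : ℂ} (hw : w ∈ ball (0 : ℂ) 1) :
    ball w ((1 - ‖w‖) / 2) ⊆ ball 0 1 := by
  refine ball_subset_ball' ?_
  rw [dist_zero_right]
  linarith [mem_ball_zero_iff.1 hw]

theorem ofReal_rpow_mul_setLIntegral_ball_le (hα : -1 < α) {w : ℂ} (hw : w ∈ ball (0 : ℂ) 1)
    (g : ℂ → ℝ≥0∞) :
    ENNReal.ofReal (1 - ‖w‖) ^ α * ∫⁻ z in ball w ((1 - ‖w‖) / 2), g z ≤
      ENNReal.ofReal (3 ^ |α| * (Real.pi / (α + 1))) *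
        ∫⁻ z in ball w ((1 - ‖w‖) / 2), g z ∂bergmanMeasure α := by
  have hα_pos : 0 < α + 1 := by linarith
  have hw_pos : 0 < 1 - ‖w‖ := sub_pos.2 (mem_ball_zero_iff.1 hw)
  have h_weight {z : ℂ} (hz : z ∈ ball w ((1 - ‖w‖) / 2)) :
      (1 - ‖w‖) ^ α ≤ 3 ^ |α| * (1 - ‖z‖ ^ 2) ^ α := by
    rw [mem_ball_iff_norm] at hz
    have h_upper := norm_sub_norm_le z w
    have h_lower := norm_sub_norm_le w z
    rw [norm_sub_rev] at h_lower
    have := norm_nonneg z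
    exact rpow_le_rpow_abs_mul_rpow α hw_pos (by nlinarith) three_pos (by nlinarith) (by nlinarith)
  have h_density {z : ℂ} (hz : z ∈ ball w ((1 - ‖w‖) / 2)) :
      ENNReal.ofReal (1 - ‖w‖) ^ α ≤ ENNReal.ofReal (3 ^ |α| * (Real.pi / (α + 1))) *
        ENNReal.ofReal ((α + 1) / Real.pi * (1 - ‖z‖ ^ 2) ^ α) := by
    rw [ENNReal.ofReal_rpow_of_pos hw_pos, ← ENNReal.ofReal_mul (by positivity)]
    refine ENNReal.ofReal_le_ofReal ((h_weight hz).trans_eq ?_)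
    field_simp
  rw [bergmanMeasure, restrict_withDensity measurableSet_ball,
    Measure.restrict_restrict_of_subset (ball_half_one_sub_norm_subset hw),
    lintegral_withDensity_eq_lintegral_mul_non_measurable _ measurable_bergmanMeasure_density
      (Eventually.of_forall fun _ => ENNReal.ofReal_lt_top),
    ← lintegral_const_mul' _ _ (by rw [ENNReal.ofReal_rpow_of_pos hw_pos]; finiteness),
    ← lintegral_const_mul' _ _ ENNReal.ofReal_ne_top]
  refine setLIntegral_mono' measurableSet_ball fun z hz => ?_
  rw [Pi.mul_apply, ← mul_assoc]
  exact mul_le_mul_left (h_density hz) _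

theorem exists_enorm_rpow_mul_le_setLIntegral_ball (hp : 1 ≤ p) (hα : -1 < α) :
    ∃ C : ℝ≥0, ∀ f : ℂ → ℂ, DifferentiableOn ℂ f (ball 0 1) → ∀ w ∈ ball (0 : ℂ) 1,
      ‖f w‖ₑ ^ p * ENNReal.ofReal (1 - ‖w‖) ^ (α + 2) ≤
        C * ∫⁻ z in ball w ((1 - ‖w‖) / 2), ‖f z‖ₑ ^ p ∂bergmanMeasure α := by
  refine ⟨(4 / Real.pi).toNNReal * (3 ^ |α| * (Real.pi / (α + 1))).toNNReal,
    fun f hf w hw => ?_⟩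
  have hw_pos : 0 < 1 - ‖w‖ := sub_pos.2 (mem_ball_zero_iff.1 hw)
  have h_area : ENNReal.ofReal (1 - ‖w‖) ^ (α + 2) =
      ENNReal.ofReal (4 / Real.pi) * ENNReal.ofReal (1 - ‖w‖) ^ α *
        volume (ball w ((1 - ‖w‖) / 2)) := by
    rw [ENNReal.rpow_add _ _ (ENNReal.ofReal_pos.2 hw_pos).ne' ENNReal.ofReal_ne_top,
      mul_right_comm, mul_comm]
    congr 1
    rw [Complex.volume_ball, ← ENNReal.ofReal_coe_nnreal, ← ENNReal.ofReal_pow (by positivity),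
      ← ENNReal.ofReal_mul (by positivity), ← ENNReal.ofReal_mul (by positivity),
      ENNReal.rpow_ofNat, ← ENNReal.ofReal_pow hw_pos.le, NNReal.coe_real_pi]
    congr 1
    field_simp
    norm_num
  calc ‖f w‖ₑ ^ p * ENNReal.ofReal (1 - ‖w‖) ^ (α + 2)
      = ENNReal.ofReal (4 / Real.pi) * (ENNReal.ofReal (1 - ‖w‖) ^ α *
          (‖f w‖ₑ ^ p * volume (ball w ((1 - ‖w‖) / 2)))) := by
        rw [h_area]
        ring
    _ ≤ ENNReal.ofReal (4 / Real.pi) * (ENNReal.ofReal (1 - ‖w‖) ^ α *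
          ∫⁻ z in ball w ((1 - ‖w‖) / 2), ‖f z‖ₑ ^ p) := by
        gcongr
        exact enorm_rpow_center_mul_volume_ball_le hp (hf.mono (ball_half_one_sub_norm_subset hw))
    _ ≤ _ := by
        rw [ENNReal.coe_mul, mul_assoc]
        exact mul_le_mul_right (ofReal_rpow_mul_setLIntegral_ball_le hα hw _) _

theorem exists_enorm_mul_rpow_le_bergmanNorm (hp : 1 ≤ p) (hα : -1 < α) :
    ∃ C : ℝ≥0, ∀ f : ℂ → ℂ, DifferentiableOn ℂ f (ball 0 1) → ∀ w ∈ ball (0 : ℂ) 1,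
      ‖f w‖ₑ * ENNReal.ofReal (1 - ‖w‖) ^ ((α + 2) / p) ≤ C * bergmanNorm p α f := by
  have hp_pos : 0 < p := by linarith
  obtain ⟨C, hC⟩ := exists_enorm_rpow_mul_le_setLIntegral_ball hp hα
  refine ⟨C ^ (1 / p), fun f hf w hw => (ENNReal.rpow_le_rpow_iff hp_pos).1 ?_⟩
  calc (‖f w‖ₑ * ENNReal.ofReal (1 - ‖w‖) ^ ((α + 2) / p)) ^ p
      = ‖f w‖ₑ ^ p * ENNReal.ofReal (1 - ‖w‖) ^ (α + 2) := by
        rw [ENNReal.mul_rpow_of_nonneg _ _ hp_pos.le, ← ENNReal.rpow_mul,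
          div_mul_cancel₀ _ hp_pos.ne']
    _ ≤ C * ∫⁻ z in ball w ((1 - ‖w‖) / 2), ‖f z‖ₑ ^ p ∂bergmanMeasure α := hC f hf w hw
    _ ≤ C * ∫⁻ z, ‖f z‖ₑ ^ p ∂bergmanMeasure α :=
        mul_le_mul_right (setLIntegral_le_lintegral _ _) _
    _ = _ := by
        rw [ENNReal.mul_rpow_of_nonneg _ _ hp_pos.le, bergmanNorm_rpow hp_pos hα,
          ← ENNReal.coe_rpow_of_nonneg _ (by positivity), one_div,
          NNReal.rpow_inv_rpow hp_pos.ne']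

end PointwiseGrowth

section RadialMeasure

variable {α p : ℝ} {μ : Measure ℝ} {f : ℂ → ℂ}

theorem hasSublevelGrowth_of_measure_Ico_le [IsFiniteMeasure μ] (hμ : ∀ᵐ t ∂μ, t ∈ Ico (0 : ℝ) 1)
    {C : ℝ} (hC : ∀ t ∈ Ico (0 : ℝ) 1, (μ (Ico t 1)).toReal ≤ C * (1 - t)) :
    HasSublevelGrowth μ (fun t : ℝ => ‖1 - t‖₊) 1 := by
  refine ⟨C.toNNReal, fun s => ?_⟩
  set a : ℝ := max (1 - s) 0
  have h_subset : {t : ℝ | ‖1 - t‖₊ ≤ s} ≤ᵐ[μ] Ico a 1 :=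
    hμ.mono fun t ht hts => by
      have h_le : 1 - t ≤ s := (Real.le_norm_self _).trans (NNReal.coe_le_coe.2 hts)
      exact ⟨max_le (by linarith) ht.1, ht.2⟩
  refine (measure_mono_ae h_subset).trans ?_
  rw [ENNReal.rpow_one]
  rcases lt_or_ge a 1 with ha | ha
  · have h_length : 1 - a ≤ s := by linarith [le_max_left (1 - (s : ℝ)) 0]
    calc μ (Ico a 1) ≤ ENNReal.ofReal (C * (1 - a)) := by
          rw [← ENNReal.ofReal_toReal (measure_ne_top μ _)]
          exact ENNReal.ofReal_le_ofReal (hC a ⟨le_max_right _ _, ha⟩)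
      _ ≤ ENNReal.ofReal C * ENNReal.ofReal s := by
          rw [ENNReal.ofReal_mul' (by linarith)]
          gcongr
      _ = _ := by rw [ENNReal.ofReal_coe_nnreal, ENNReal.ofReal]
  · rw [Ico_eq_empty_of_le ha, measure_empty]
    exact zero_le

theorem ofReal_mem_ball_zero_one {t : ℝ} (ht : t ∈ Ico (0 : ℝ) 1) : (t : ℂ) ∈ ball (0 : ℂ) 1 := by
  rw [mem_ball_zero_iff, Complex.norm_of_nonneg ht.1]
  exact ht.2

theorem ofReal_one_sub_norm_ofReal {t : ℝ} (ht : t ∈ Ico (0 : ℝ) 1) :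
    ENNReal.ofReal (1 - ‖(t : ℂ)‖) = ‖1 - t‖₊ := by
  rw [Complex.norm_of_nonneg ht.1, ← Real.enorm_of_nonneg (sub_nonneg.2 ht.2.le),
    enorm_eq_nnnorm]

theorem aestronglyMeasurable_ofReal (hμ : ∀ᵐ t ∂μ, t ∈ Ico (0 : ℝ) 1)
    (hf : ContinuousOn f (ball 0 1)) : AEStronglyMeasurable (fun t : ℝ => f t) μ := by
  rw [← Measure.restrict_eq_self_of_ae_mem hμ]
  exact (hf.comp Complex.continuous_ofReal.continuousOn
    fun _ => ofReal_mem_ball_zero_one).aestronglyMeasurable measurableSet_Ico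

theorem integrable_ofReal_of_bergmanNorm_lt_top [IsFiniteMeasure μ]
    (hμ : ∀ᵐ t ∂μ, t ∈ Ico (0 : ℝ) 1) (hμ_growth : HasSublevelGrowth μ (fun t : ℝ => ‖1 - t‖₊) 1)
    (hα1 : -1 < α) (hα2 : α < p - 2) (hf : DifferentiableOn ℂ f (ball 0 1))
    (hf_norm : bergmanNorm p α f < ⊤) : Integrable (fun t : ℝ => f t) μ := by
  have hp : 1 ≤ p := by linarith
  have hp_pos : 0 < p := by linarith
  obtain ⟨C, hC⟩ := exists_enorm_mul_rpow_le_bergmanNorm hp hα1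
  have h_bound : ∀ᵐ t : ℝ ∂μ, ‖f t‖ₑ ≤
      C * bergmanNorm p α f * (‖1 - t‖₊ : ℝ≥0∞) ^ (-((α + 2) / p)) := by
    filter_upwards [hμ] with t ht
    have h_pos : (‖1 - t‖₊ : ℝ≥0∞) ≠ 0 := by
      simpa [sub_eq_zero] using ht.2.ne'
    have h := hC f hf t (ofReal_mem_ball_zero_one ht)
    rw [ofReal_one_sub_norm_ofReal ht] at h
    rw [ENNReal.rpow_neg, ← div_eq_mul_inv, ENNReal.le_div_iff_mul_le]
    · exact h
    · exact Or.inl (ENNReal.rpow_pos (pos_iff_ne_zero.2 h_pos) ENNReal.coe_ne_top).ne'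
    · exact Or.inl (ENNReal.rpow_ne_top_of_ne_zero h_pos ENNReal.coe_ne_top)
  refine ⟨aestronglyMeasurable_ofReal hμ hf.continuousOn, ?_⟩
  refine (lintegral_mono_ae h_bound).trans_lt ?_
  rw [lintegral_const_mul' _ _ (by finiteness)]
  exact ENNReal.mul_lt_top (by finiteness) (hμ_growth.lintegral_rpow_neg_lt_top (by fun_prop)
    (div_nonneg (by linarith) hp_pos.le) ((div_lt_one hp_pos).2 (by linarith)))

theorem one_sub_norm_le_norm_one_sub_mul {t : ℝ} (ht : t ∈ Icc (0 : ℝ) 1) (z : ℂ) :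
    1 - ‖z‖ ≤ ‖1 - t * z‖ := by
  have h := norm_sub_norm_le (1 : ℂ) (t * z)
  rw [norm_one, norm_mul, Complex.norm_of_nonneg ht.1] at h
  linarith [mul_le_of_le_one_left (norm_nonneg z) ht.2]

theorem integrable_div_one_sub_mul (hμ : ∀ᵐ t ∂μ, t ∈ Ico (0 : ℝ) 1)
    (hf : Integrable (fun t : ℝ => f t) μ) {z : ℂ} (hz : z ∈ ball (0 : ℂ) 1) :
    Integrable (fun t : ℝ => f t / (1 - t * z)) μ := by
  have h_kernel : ∀ᵐ t : ℝ ∂μ, ‖(1 - t * z)⁻¹‖ ≤ (1 - ‖z‖)⁻¹ := by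
    filter_upwards [hμ] with t ht
    rw [norm_inv]
    exact inv_anti₀ (sub_pos.2 (mem_ball_zero_iff.1 hz))
      (one_sub_norm_le_norm_one_sub_mul (Ico_subset_Icc_self ht) z)
  have h_meas : Measurable fun t : ℝ => (1 - t * z)⁻¹ := by fun_prop
  simpa only [div_eq_inv_mul] using hf.bdd_mul h_meas.aestronglyMeasurable h_kernel

theorem differentiableOn_Imu (hμ : ∀ᵐ t ∂μ, t ∈ Ico (0 : ℝ) 1)
    (hf : Integrable (fun t : ℝ => f t) μ) : DifferentiableOn ℂ (Imu μ f) (ball 0 1) := by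
  intro w hw
  set ε := (1 - ‖w‖) / 2
  have hε : 0 < ε := half_pos (sub_pos.2 (mem_ball_zero_iff.1 hw))
  have h_lower {t : ℝ} (ht : t ∈ Ico (0 : ℝ) 1) {z : ℂ} (hz : z ∈ ball w ε) :
      ε ≤ ‖1 - t * z‖ := by
    have h_kernel := one_sub_norm_le_norm_one_sub_mul (Ico_subset_Icc_self ht) z
    have h_sub := norm_sub_norm_le z w
    rw [mem_ball_iff_norm] at hz
    linarith [show ε = (1 - ‖w‖) / 2 from rfl]
  have h_bound : ∀ᵐ t : ℝ ∂μ, ∀ z ∈ ball w ε,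
      ‖f t * (t / (1 - t * z) ^ 2)‖ ≤ ‖f t‖ * (1 / ε ^ 2) := by
    filter_upwards [hμ] with t ht z hz
    rw [norm_mul, norm_div, norm_pow, Complex.norm_of_nonneg ht.1]
    gcongr
    exacts [ht.2.le, h_lower ht hz]
  have h_deriv : ∀ᵐ t : ℝ ∂μ, ∀ z ∈ ball w ε,
      HasDerivAt (fun z => f t / (1 - t * z)) (f t * (t / (1 - t * z) ^ 2)) z := by
    filter_upwards [hμ] with t ht z hz
    have h_ne : 1 - t * z ≠ 0 := norm_pos_iff.1 (hε.trans_le (h_lower ht hz))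
    have h_affine : HasDerivAt (fun z : ℂ => 1 - t * z) (-t) z := by
      simpa using ((hasDerivAt_id z).const_mul (t : ℂ)).const_sub 1
    simpa only [neg_neg, div_eq_mul_inv] using (h_affine.fun_inv h_ne).const_mul (f t)
  refine (hasDerivAt_integral_of_dominated_loc_of_deriv_le (ball_mem_nhds w hε) ?_
    (integrable_div_one_sub_mul hμ hf hw) ?_ h_bound (hf.norm.mul_const _)
    h_deriv).2.differentiableAt.differentiableWithinAt
  · filter_upwards [isOpen_ball.mem_nhds hw] with z hz
      using (integrable_div_one_sub_mul hμ hf hz).aestronglyMeasurable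
  · exact hf.aestronglyMeasurable.mul (by fun_prop : Measurable _).aestronglyMeasurable

theorem aemeasurable_enorm_rpow_bergmanMeasure (hf : ContinuousOn f (ball 0 1)) :
    AEMeasurable (fun z => ‖f z‖ₑ ^ p) (bergmanMeasure α) :=
  ((hf.aestronglyMeasurable measurableSet_ball).mono_ac
    (withDensity_absolutelyContinuous _ _)).enorm.pow_const p

theorem ball_half_one_sub_norm_ofReal_subset {t : ℝ} (ht : t ∈ Ico (0 : ℝ) 1) :
    ball (t : ℂ) ((1 - ‖(t : ℂ)‖) / 2) ⊆
      {z | ‖1 - z‖₊ ≤ 2 * ‖1 - t‖₊ ∧ ‖1 - t‖₊ ≤ 2 * ‖1 - z‖₊} := by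
  intro z hz
  rw [mem_ball_iff_norm', Complex.norm_of_nonneg ht.1] at hz
  have h_dist : ‖(1 : ℂ) - t‖ = 1 - t := by
    rw [← Complex.ofReal_one, ← Complex.ofReal_sub, Complex.norm_of_nonneg (by linarith [ht.2])]
  have h_upper := norm_sub_le_norm_sub_add_norm_sub 1 (t : ℂ) z
  have h_lower := norm_sub_le_norm_sub_add_norm_sub 1 z (t : ℂ)
  rw [norm_sub_rev z] at h_lower
  simp only [mem_ofPred_eq, ← NNReal.coe_le_coe, NNReal.coe_mul, NNReal.coe_ofNat, coe_nnnorm,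
    Real.norm_of_nonneg (sub_nonneg.2 ht.2.le)]
  constructor <;> linarith

theorem exists_lintegral_ofReal_rpow_mul_rpow_le [SFinite μ] (hμ : ∀ᵐ t ∂μ, t ∈ Ico (0 : ℝ) 1)
    (hμ_growth : HasSublevelGrowth μ (fun t : ℝ => ‖1 - t‖₊) 1) (hp : 1 ≤ p) (hα : -1 < α) :
    ∃ C : ℝ≥0, ∀ f : ℂ → ℂ, DifferentiableOn ℂ f (ball 0 1) →
      ∫⁻ t : ℝ, ‖f t‖ₑ ^ p * (‖1 - t‖₊ : ℝ≥0∞) ^ (α + 1) ∂μ ≤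
        C * ∫⁻ z, ‖f z‖ₑ ^ p ∂bergmanMeasure α := by
  obtain ⟨A, hA⟩ := exists_enorm_rpow_mul_le_setLIntegral_ball hp hα
  obtain ⟨B, hB⟩ := hμ_growth.exists_lintegral_rpow_neg_mul_setLIntegral_le zero_le_one
    (u := fun z : ℂ => ‖1 - z‖₊) (by fun_prop) (by fun_prop)
    ((hasSublevelGrowth_bergmanMeasure hα).ae_ne_zero (by linarith))
  refine ⟨A * B, fun f hf => ?_⟩
  have h_pointwise : ∀ᵐ t : ℝ ∂μ, ‖f t‖ₑ ^ p * (‖1 - t‖₊ : ℝ≥0∞) ^ (α + 1) ≤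
      A * ((‖1 - t‖₊ : ℝ≥0∞) ^ (-1 : ℝ) *
        ∫⁻ z in {z | ‖1 - z‖₊ ≤ 2 * ‖1 - t‖₊ ∧ ‖1 - t‖₊ ≤ 2 * ‖1 - z‖₊},
          ‖f z‖ₑ ^ p ∂bergmanMeasure α) := by
    filter_upwards [hμ, hμ_growth.ae_ne_zero one_pos] with t ht ht_ne
    have h := hA f hf t (ofReal_mem_ball_zero_one ht)
    rw [ofReal_one_sub_norm_ofReal ht] at h
    calc ‖f t‖ₑ ^ p * (‖1 - t‖₊ : ℝ≥0∞) ^ (α + 1)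
        = (‖1 - t‖₊ : ℝ≥0∞) ^ (-1 : ℝ) * (‖f t‖ₑ ^ p * (‖1 - t‖₊ : ℝ≥0∞) ^ (α + 2)) := by
          rw [mul_left_comm, ← ENNReal.rpow_add _ _ (ENNReal.coe_ne_zero.2 ht_ne)
            ENNReal.coe_ne_top, show -1 + (α + 2) = α + 1 by ring]
      _ ≤ (‖1 - t‖₊ : ℝ≥0∞) ^ (-1 : ℝ) * (A * ∫⁻ z in ball (t : ℂ) ((1 - ‖(t : ℂ)‖) / 2),
            ‖f z‖ₑ ^ p ∂bergmanMeasure α) := mul_le_mul_right h _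
      _ ≤ _ := by
          rw [mul_left_comm]
          gcongr
          exact ball_half_one_sub_norm_ofReal_subset ht
  refine (lintegral_mono_ae h_pointwise).trans ?_
  rw [lintegral_const_mul' _ _ ENNReal.coe_ne_top, ENNReal.coe_mul, mul_assoc]
  exact mul_le_mul_right (hB _ (aemeasurable_enorm_rpow_bergmanMeasure hf.continuousOn)) _

theorem enorm_inv_one_sub_mul_le {t : ℝ} (ht : t ∈ Ico (0 : ℝ) 1) {z : ℂ}
    (hz : z ∈ ball (0 : ℂ) 1) :
    ‖(1 - t * z)⁻¹‖ₑ ≤ 2 * (max (‖1 - z‖₊ : ℝ≥0∞) ‖1 - t‖₊)⁻¹ := by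
  have hz' : ‖z‖ < 1 := mem_ball_zero_iff.1 hz
  have h_ne : 1 - t * z ≠ 0 := norm_pos_iff.1 <|
    (sub_pos.2 hz').trans_le (one_sub_norm_le_norm_one_sub_mul (Ico_subset_Icc_self ht) z)
  have h_radial : 1 - t ≤ ‖1 - t * z‖ := by
    have h := norm_sub_norm_le (1 : ℂ) (t * z)
    rw [norm_one, norm_mul, Complex.norm_of_nonneg ht.1] at h
    linarith [mul_le_of_le_one_right ht.1 hz'.le]
  have h_center : ‖1 - z‖ ≤ 2 * ‖1 - t * z‖ := by
    have h := norm_sub_le_norm_sub_add_norm_sub 1 (t * z) z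
    rw [← sub_one_mul, norm_mul, ← Complex.ofReal_one, ← Complex.ofReal_sub, Complex.norm_real,
      Real.norm_eq_abs, abs_sub_comm, abs_of_pos (sub_pos.2 ht.2), Complex.ofReal_one] at h
    linarith [mul_le_of_le_one_right (sub_nonneg.2 ht.2.le) hz'.le]
  have h_max : max ‖1 - z‖₊ ‖1 - t‖₊ ≤ 2 * ‖1 - t * z‖₊ := by
    refine max_le (NNReal.coe_le_coe.1 h_center) (NNReal.coe_le_coe.1 ?_)
    rw [coe_nnnorm, Real.norm_of_nonneg (sub_nonneg.2 ht.2.le), NNReal.coe_mul, coe_nnnorm,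
      NNReal.coe_ofNat]
    linarith [norm_nonneg (1 - t * z)]
  calc ‖(1 - t * z)⁻¹‖ₑ = 2 * ((2 * ‖1 - t * z‖₊ : ℝ≥0) : ℝ≥0∞)⁻¹ := by
        rw [enorm_inv h_ne, enorm_eq_nnnorm, ENNReal.coe_mul, ENNReal.coe_ofNat,
          ENNReal.mul_inv (Or.inl two_ne_zero) (Or.inl ENNReal.ofNat_ne_top), ← mul_assoc,
          ENNReal.mul_inv_cancel two_ne_zero ENNReal.ofNat_ne_top, one_mul]
    _ ≤ 2 * (max (‖1 - z‖₊ : ℝ≥0∞) ‖1 - t‖₊)⁻¹ := by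
        rw [← ENNReal.coe_max]
        gcongr

theorem exists_bergmanNorm_Imu_le [SFinite μ] (hμ : ∀ᵐ t ∂μ, t ∈ Ico (0 : ℝ) 1)
    (hμ_growth : HasSublevelGrowth μ (fun t : ℝ => ‖1 - t‖₊) 1) (hα1 : -1 < α) (hα2 : α < p - 2) :
    ∃ C : ℝ≥0, ∀ f : ℂ → ℂ, DifferentiableOn ℂ f (ball 0 1) →
      bergmanNorm p α (Imu μ f) ≤ C * bergmanNorm p α f := by
  have hp : 1 < p := by linarith
  have hp_pos : 0 < p := by linarith
  obtain ⟨A, hA⟩ := exists_lintegral_rpow_lintegral_inv_max_le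
    (hasSublevelGrowth_bergmanMeasure hα1) (by fun_prop) hμ_growth (by fun_prop) hp
    (by linarith) (show α + 2 < p by linarith)
  obtain ⟨B, hB⟩ := exists_lintegral_ofReal_rpow_mul_rpow_le hμ hμ_growth hp.le hα1
  refine ⟨(2 ^ p * (A * B)) ^ (1 / p), fun f hf => (ENNReal.rpow_le_rpow_iff hp_pos).1 ?_⟩
  have h_pointwise : ∀ᵐ z ∂bergmanMeasure α, ‖Imu μ f z‖ₑ ≤
      2 * ∫⁻ t : ℝ, (max (‖1 - z‖₊ : ℝ≥0∞) ‖1 - t‖₊)⁻¹ * ‖f t‖ₑ ∂μ := by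
    filter_upwards [ae_bergmanMeasure_mem_ball] with z hz
    rw [← lintegral_const_mul' _ _ ENNReal.ofNat_ne_top]
    refine (enorm_integral_le_lintegral_enorm _).trans (lintegral_mono_ae ?_)
    filter_upwards [hμ] with t ht
    rw [div_eq_inv_mul, enorm_mul, ← mul_assoc]
    exact mul_le_mul_left (enorm_inv_one_sub_mul_le ht hz) _
  calc bergmanNorm p α (Imu μ f) ^ p = ∫⁻ z, ‖Imu μ f z‖ₑ ^ p ∂bergmanMeasure α :=
        bergmanNorm_rpow hp_pos hα1 _
    _ ≤ ∫⁻ z, 2 ^ p * (∫⁻ t : ℝ, (max (‖1 - z‖₊ : ℝ≥0∞) ‖1 - t‖₊)⁻¹ * ‖f t‖ₑ ∂μ) ^ p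
          ∂bergmanMeasure α := by
        refine lintegral_mono_ae (h_pointwise.mono fun z hz => ?_)
        rw [← ENNReal.mul_rpow_of_nonneg _ _ hp_pos.le]
        exact ENNReal.rpow_le_rpow hz hp_pos.le
    _ ≤ 2 ^ p * (A * (B * ∫⁻ z, ‖f z‖ₑ ^ p ∂bergmanMeasure α)) := by
        rw [lintegral_const_mul' _ _ (by finiteness)]
        gcongr
        refine (hA _ (aestronglyMeasurable_ofReal hμ hf.continuousOn).enorm).trans ?_
        rw [show α + 2 - 1 = α + 1 by ring]
        exact mul_le_mul_right (hB f hf) _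
    _ = _ := by
        rw [ENNReal.mul_rpow_of_nonneg _ _ hp_pos.le, bergmanNorm_rpow hp_pos hα1,
          ← ENNReal.coe_rpow_of_nonneg _ hp_pos.le, one_div, NNReal.rpow_inv_rpow hp_pos.ne']
        push_cast [ENNReal.coe_rpow_of_nonneg _ hp_pos.le]
        ring

theorem exists_bergmanNorm_inv_one_sub_mul_le (hα1 : -1 < α) (hα2 : α < p - 2) :
    ∃ C : ℝ≥0, ∀ a ∈ Ico (0 : ℝ) 1, bergmanNorm p α (fun z => (1 - a * z)⁻¹) ≤
      C * ENNReal.ofReal (1 - a) ^ ((α + 2) / p - 1) := by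
  have hp_pos : 0 < p := by linarith
  obtain ⟨C, hC⟩ := (hasSublevelGrowth_bergmanMeasure hα1).exists_lintegral_rpow_mul_max_rpow_le
    (by fun_prop) le_rfl (by linarith) (show α + 2 < 0 + p by linarith)
  refine ⟨(2 ^ p * C) ^ (1 / p), fun a ha => (ENNReal.rpow_le_rpow_iff hp_pos).1 ?_⟩
  have ha_ne : ‖1 - a‖₊ ≠ 0 := nnnorm_ne_zero_iff.2 (sub_pos.2 ha.2).ne'
  have ha_eq : (‖1 - a‖₊ : ℝ≥0∞) = ENNReal.ofReal (1 - a) := by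
    rw [← enorm_eq_nnnorm, Real.enorm_of_nonneg (sub_nonneg.2 ha.2.le)]
  calc bergmanNorm p α (fun z => (1 - a * z)⁻¹) ^ p
      = ∫⁻ z, ‖(1 - a * z)⁻¹‖ₑ ^ p ∂bergmanMeasure α := bergmanNorm_rpow hp_pos hα1 _
    _ ≤ ∫⁻ z, 2 ^ p * ((‖1 - z‖₊ : ℝ≥0∞) ^ (-0 : ℝ) *
          max (‖1 - z‖₊ : ℝ≥0∞) ‖1 - a‖₊ ^ (-p)) ∂bergmanMeasure α := by
        refine lintegral_mono_ae (ae_bergmanMeasure_mem_ball.mono fun z hz => ?_)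
        rw [neg_zero, ENNReal.rpow_zero, one_mul, ENNReal.rpow_neg, ← ENNReal.inv_rpow,
          ← ENNReal.mul_rpow_of_nonneg _ _ hp_pos.le]
        exact ENNReal.rpow_le_rpow (enorm_inv_one_sub_mul_le ha hz) hp_pos.le
    _ ≤ 2 ^ p * (C * (‖1 - a‖₊ : ℝ≥0∞) ^ (α + 2 - 0 - p)) := by
        rw [lintegral_const_mul' _ _ (by finiteness)]
        exact mul_le_mul_right (hC _ ha_ne) _
    _ = _ := by
        rw [ENNReal.mul_rpow_of_nonneg _ _ hp_pos.le, ← ENNReal.coe_rpow_of_nonneg _ hp_pos.le,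
          one_div, NNReal.rpow_inv_rpow hp_pos.ne', ← ENNReal.rpow_mul, sub_mul, one_mul,
          div_mul_cancel₀ _ hp_pos.ne', sub_zero, ha_eq]
        push_cast [ENNReal.coe_rpow_of_nonneg _ hp_pos.le]
        ring

theorem measure_Ico_le_enorm_Imu_inv_one_sub_mul {a : ℝ} (ha : a ∈ Ico (0 : ℝ) 1)
    (h_int : Integrable (fun t : ℝ => (1 - a * t : ℂ)⁻¹ / (1 - t * a)) μ) :
    μ (Ico a 1) ≤
      ENNReal.ofReal (1 - a) ^ 2 * (4 * ‖Imu μ (fun z => (1 - a * z)⁻¹) a‖ₑ) := by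
  have ha_pos : 0 < 1 - a := sub_pos.2 ha.2
  have h_kernel (t : ℝ) :
      (1 - a * t : ℂ)⁻¹ / (1 - t * a) = (((1 - a * t) ^ 2)⁻¹ : ℝ) := by
    push_cast
    rw [div_eq_mul_inv, ← mul_inv, mul_comm (t : ℂ), sq]
  have h_int_real : Integrable (fun t : ℝ => ((1 - a * t) ^ 2)⁻¹) μ := by
    simpa only [h_kernel, RCLike.re_eq_complex_re, Complex.ofReal_re] using h_int.re
  have h_Imu : ‖Imu μ (fun z => (1 - a * z)⁻¹) a‖ₑ =
      ∫⁻ t, ENNReal.ofReal ((1 - a * t) ^ 2)⁻¹ ∂μ := by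
    rw [← ofReal_integral_eq_lintegral_ofReal h_int_real (ae_of_all _ fun t => by positivity),
      ← Real.enorm_of_nonneg (integral_nonneg fun t => by positivity), Imu]
    simp only [h_kernel]
    rw [integral_complex_ofReal, ← ofReal_norm, Complex.norm_real, ofReal_norm]
  have h_lower {t : ℝ} (ht : t ∈ Ico a 1) :
      ((2 * (1 - a)) ^ 2)⁻¹ ≤ ((1 - a * t) ^ 2)⁻¹ := by
    have h_upper : 1 - a * t ≤ 2 * (1 - a) := by nlinarith [ha.1, ha.2, ht.1]
    have h_pos : 0 < 1 - a * t := by nlinarith [ha.1, ha.2, ht.2]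
    gcongr
  calc μ (Ico a 1) = ENNReal.ofReal ((2 * (1 - a)) ^ 2) *
        ∫⁻ _ in Ico a 1, ENNReal.ofReal ((2 * (1 - a)) ^ 2)⁻¹ ∂μ := by
        rw [setLIntegral_const, ← mul_assoc, ← ENNReal.ofReal_mul (by positivity),
          mul_inv_cancel₀ (by positivity), ENNReal.ofReal_one, one_mul]
    _ ≤ ENNReal.ofReal ((2 * (1 - a)) ^ 2) * ∫⁻ t, ENNReal.ofReal ((1 - a * t) ^ 2)⁻¹ ∂μ := by
        refine mul_le_mul_right ((setLIntegral_mono' measurableSet_Ico fun t ht => ?_).trans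
          (setLIntegral_le_lintegral (Ico a 1) _)) _
        exact ENNReal.ofReal_le_ofReal (h_lower ht)
    _ = _ := by
        rw [h_Imu, ENNReal.ofReal_pow (by positivity), ENNReal.ofReal_mul zero_le_two,
          ENNReal.ofReal_ofNat]
        ring

theorem exists_measure_Ico_le_of_bergmanNorm_Imu_le (hα1 : -1 < α) (hα2 : α < p - 2) {C : ℝ≥0}
    (hC : ∀ f : ℂ → ℂ, DifferentiableOn ℂ f (ball (0 : ℂ) 1) → bergmanNorm p α f < ⊤ →
      (∀ z ∈ ball (0 : ℂ) 1, Integrable (fun t : ℝ => f (t : ℂ) / (1 - (t : ℂ) * z)) μ) ∧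
      DifferentiableOn ℂ (Imu μ f) (ball (0 : ℂ) 1) ∧
      bergmanNorm p α (Imu μ f) ≤ C * bergmanNorm p α f) :
    ∃ D : ℝ≥0, ∀ a ∈ Ico (0 : ℝ) 1, μ (Ico a 1) ≤ D * ENNReal.ofReal (1 - a) := by
  obtain ⟨A, hA⟩ := exists_enorm_mul_rpow_le_bergmanNorm (show 1 ≤ p by linarith) hα1
  obtain ⟨B, hB⟩ := exists_bergmanNorm_inv_one_sub_mul_le hα1 hα2
  refine ⟨4 * A * C * B, fun a ha => ?_⟩
  set f : ℂ → ℂ := fun z => (1 - a * z)⁻¹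
  set d := ENNReal.ofReal (1 - a)
  have hd_pos : d ≠ 0 := (ENNReal.ofReal_pos.2 (sub_pos.2 ha.2)).ne'
  have hd_top : d ≠ ⊤ := ENNReal.ofReal_ne_top
  have hf : DifferentiableOn ℂ f (ball 0 1) := by
    refine DifferentiableOn.inv (by fun_prop) fun z hz => norm_pos_iff.1 ?_
    exact (sub_pos.2 (mem_ball_zero_iff.1 hz)).trans_le
      (one_sub_norm_le_norm_one_sub_mul (Ico_subset_Icc_self ha) z)
  have hf_norm : bergmanNorm p α f < ⊤ := (hB a ha).trans_lt <| ENNReal.mul_lt_top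
    ENNReal.coe_lt_top (ENNReal.rpow_ne_top_of_ne_zero hd_pos hd_top).lt_top
  obtain ⟨h_int, h_diff, h_norm⟩ := hC f hf hf_norm
  have h_ball := ofReal_mem_ball_zero_one ha
  have h_growth : ‖Imu μ f a‖ₑ * d ^ ((α + 2) / p) ≤ A * (C * (B * d ^ ((α + 2) / p - 1))) := by
    have h := hA _ h_diff a h_ball
    rw [Complex.norm_of_nonneg ha.1] at h
    exact h.trans (mul_le_mul_right (h_norm.trans (mul_le_mul_right (hB a ha) _)) _)
  calc μ (Ico a 1) ≤ d ^ 2 * (4 * ‖Imu μ f a‖ₑ) :=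
        measure_Ico_le_enorm_Imu_inv_one_sub_mul ha (h_int a h_ball)
    _ = 4 * d ^ (2 - (α + 2) / p) * (‖Imu μ f a‖ₑ * d ^ ((α + 2) / p)) := by
        rw [← ENNReal.rpow_ofNat, ← sub_add_cancel 2 ((α + 2) / p),
          ENNReal.rpow_add _ _ hd_pos hd_top, sub_add_cancel]
        ring
    _ ≤ 4 * d ^ (2 - (α + 2) / p) * (A * (C * (B * d ^ ((α + 2) / p - 1)))) :=
        mul_le_mul_right h_growth _
    _ = 4 * A * C * B * (d ^ (2 - (α + 2) / p) * d ^ ((α + 2) / p - 1)) := by ring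
    _ = _ := by
        rw [← ENNReal.rpow_add _ _ hd_pos hd_top,
          show 2 - (α + 2) / p + ((α + 2) / p - 1) = 1 by ring, ENNReal.rpow_one]
        push_cast
        rfl

end RadialMeasure

/-- For `p > 1` and `-1 < α < p-2`, the measure `μ` is a Carleson measure
if and only if `I_μ` is well defined and bounded from `A^p_α` into itself. -/
theorem Hmu_bounded_Apa_iff_Carleson (p α : ℝ) (hp : 1 < p)
    (hα1 : -1 < α) (hα2 : α < p - 2)
    (μ : Measure ℝ) [IsFiniteMeasure μ] (hsupp : μ (Ico (0 : ℝ) 1)ᶜ = 0) :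
    (∃ C > 0, ∀ t ∈ Ico (0 : ℝ) 1, (μ (Ico t 1)).toReal ≤ C * (1 - t)) ↔
    (∃ C > 0, ∀ f : ℂ → ℂ, DifferentiableOn ℂ f (ball (0 : ℂ) 1) → bergmanNorm p α f < ⊤ →
      (∀ z ∈ ball (0 : ℂ) 1, Integrable (fun t : ℝ => f (t : ℂ) / (1 - (t : ℂ) * z)) μ) ∧
      DifferentiableOn ℂ (Imu μ f) (ball (0 : ℂ) 1) ∧
      bergmanNorm p α (Imu μ f) ≤ ENNReal.ofReal C * bergmanNorm p α f) := by
  constructor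
  · rintro ⟨C, -, hC⟩
    have hμ : ∀ᵐ t ∂μ, t ∈ Ico (0 : ℝ) 1 := mem_ae_iff.2 hsupp
    have hμ_growth := hasSublevelGrowth_of_measure_Ico_le hμ hC
    obtain ⟨D, hD⟩ := exists_bergmanNorm_Imu_le hμ hμ_growth hα1 hα2
    refine ⟨D + 1, by positivity, fun f hf hf_norm => ?_⟩
    have hf_int := integrable_ofReal_of_bergmanNorm_lt_top hμ hμ_growth hα1 hα2 hf hf_norm
    refine ⟨fun z => integrable_div_one_sub_mul hμ hf_int, differentiableOn_Imu hμ hf_int,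
      (hD f hf).trans (mul_le_mul_left ?_ _)⟩
    rw [← ENNReal.ofReal_coe_nnreal]
    exact ENNReal.ofReal_le_ofReal (le_add_of_nonneg_right zero_le_one)
  · rintro ⟨C, -, hC⟩
    obtain ⟨D, hD⟩ := exists_measure_Ico_le_of_bergmanNorm_Imu_le (C := C.toNNReal) hα1 hα2 hC
    refine ⟨D + 1, by positivity, fun t ht => ?_⟩
    have ht_pos : 0 < 1 - t := sub_pos.2 ht.2
    refine ENNReal.toReal_le_of_le_ofReal (by positivity) ((hD t ht).trans ?_)
    rw [← ENNReal.ofReal_coe_nnreal, ← ENNReal.ofReal_mul D.coe_nonneg]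
    exact ENNReal.ofReal_le_ofReal (by gcongr; exact le_add_of_nonneg_right zero_le_one)
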